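/- arXiv:1211.1058 — 2 statements merged into one kernel-verified Lean document; each statement's English description precedes it below -/
import Mathlib

section
/- For every dimension s ≥ 1, every N ≥ 1 and every q ∈ (0,1), the probability that a random point set (z_1, …, z_N) of N i.i.d. uniform points in [0,1]^s satisfies D*_N(z_1, …, z_N) ≤ 5.7 · √(4.9 + log((1−q)^{−1})) · √s/√N is at least q. -/
open MeasureTheory Real

/-- The star-discrepancy of the point set `z 0, …, z (N-1)` in `[0,1]^s`. -/
noncomputable def starDiscrepancy (s N : ℕ) (z : Fin N → (Fin s → ℝ)) : ℝ :=
  ⨆ x : (Set.Icc (0 : Fin s → ℝ) 1),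
    |(Nat.card {n : Fin N // z n ∈ Set.Icc 0 (x : Fin s → ℝ)} : ℝ) / N
      - ∏ i, (x : Fin s → ℝ) i|

/-!
Chaining. Bracket the anchored boxes by boxes of a geometric grid, at the widths `4 ^ (-(i + 1))`.
Each lower bracket of one level is its coarser lower bracket plus a link of measure at most the
coarser width, so every box is a chain of links plus a remainder inside the finest bracket. The
indicator of a link has small variance, hence a Chernoff bound with exponent `n * t ^ 2 / (4 * v)`
that beats the number of brackets of its level, and the union bound over all links has total
probability at most `1 - q`.
-/

section Chernoff

open ProbabilityTheory

lemma measureReal_le_add_of_subset_union {Ω : Type*} [MeasurableSpace Ω] {μ : Measure Ω}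
    [IsFiniteMeasure μ] {A B C : Set Ω} {b c : ℝ} (h : A ⊆ B ∪ C) (hB : μ.real B ≤ b)
    (hC : μ.real C ≤ c) : μ.real A ≤ b + c :=
  (measureReal_mono h).trans ((measureReal_union_le B C).trans (add_le_add hB hC))

variable {Ω : Type*} [MeasurableSpace Ω] {μ : Measure Ω} [IsProbabilityMeasure μ]

lemma integrable_exp_mul_of_abs_le {X : Ω → ℝ} {c : ℝ} (hX : AEMeasurable X μ)
    (hXc : ∀ᵐ ω ∂μ, |X ω| ≤ c) (l : ℝ) : Integrable (fun ω => exp (l * X ω)) μ :=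
  integrable_exp_mul_of_mem_Icc hX (hXc.mono fun _ => abs_le.1)

lemma mgf_le_exp_sq_mul_variance {X : Ω → ℝ} {l : ℝ} (hX : AEMeasurable X μ)
    (hX1 : ∀ᵐ ω ∂μ, |X ω| ≤ 1) (hX0 : μ[X] = 0) (hl : |l| ≤ 1) :
    mgf X μ l ≤ exp (l ^ 2 * Var[X; μ]) := by
  have hmem : MemLp X 2 μ := MemLp.of_bound hX.aestronglyMeasurable 1 hX1
  have hsq : Integrable (fun ω => l ^ 2 * X ω ^ 2) μ := hmem.integrable_sq.const_mul _
  have hlin : Integrable (fun ω => 1 + l * X ω) μ :=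
    (integrable_const _).add ((hmem.integrable one_le_two).const_mul _)
  have hexp : ∀ᵐ ω ∂μ, exp (l * X ω) ≤ 1 + l * X ω + l ^ 2 * X ω ^ 2 := by
    filter_upwards [hX1] with ω hω
    have hle : |l * X ω| ≤ 1 := by
      rw [abs_mul]
      exact mul_le_one₀ hl (abs_nonneg _) hω
    linarith [le_of_abs_le (abs_exp_sub_one_sub_id_le hle), mul_pow l (X ω) 2]
  calc mgf X μ l
      ≤ ∫ ω, (1 + l * X ω + l ^ 2 * X ω ^ 2) ∂μ :=
        integral_mono_ae (integrable_exp_mul_of_abs_le hX hX1 l) (hlin.add hsq) hexp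
    _ = 1 + l ^ 2 * Var[X; μ] := by
        rw [integral_add hlin hsq, integral_add (integrable_const _)
          ((hmem.integrable one_le_two).const_mul _), integral_const_mul, integral_const_mul, hX0,
          variance_of_integral_eq_zero hX hX0]
        simp
    _ ≤ exp (l ^ 2 * Var[X; μ]) := by linarith [add_one_le_exp (l ^ 2 * Var[X; μ])]

variable {ι : Type*} [Fintype ι] {X : ι → Ω → ℝ} {T V : ℝ}

/-- The Chernoff parameter is `T / (2 * V)`; the range `T ≤ 2 * V` keeps it at most `1`. -/
lemma measureReal_le_sum_le_exp (hindep : iIndepFun X μ) (hX : ∀ i, Measurable (X i))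
    (hX1 : ∀ i, ∀ᵐ ω ∂μ, |X i ω| ≤ 1) (hX0 : ∀ i, μ[X i] = 0) (hV : 0 < V)
    (hvar : ∑ i, Var[X i; μ] ≤ V) (hT : 0 ≤ T) (hTV : T ≤ 2 * V) :
    μ.real {ω | T ≤ ∑ i, X i ω} ≤ exp (-(T ^ 2 / (4 * V))) := by
  set l := T / (2 * V)
  have hl0 : 0 ≤ l := by positivity
  have hl1 : |l| ≤ 1 := by
    rw [abs_of_nonneg hl0]
    exact div_le_one_of_le₀ hTV (by positivity)
  have hmgf : mgf (∑ i, X i) μ l ≤ exp (l ^ 2 * V) :=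
    calc mgf (∑ i, X i) μ l = ∏ i, mgf (X i) μ l := hindep.mgf_sum hX _
      _ ≤ ∏ i, exp (l ^ 2 * Var[X i; μ]) :=
          Finset.prod_le_prod (fun _ _ => mgf_nonneg) fun i _ =>
            mgf_le_exp_sq_mul_variance (hX i).aemeasurable (hX1 i) (hX0 i) hl1
      _ = exp (l ^ 2 * ∑ i, Var[X i; μ]) := by rw [← exp_sum, Finset.mul_sum]
      _ ≤ exp (l ^ 2 * V) := by gcongr
  have hint : Integrable (fun ω => exp (l * (∑ i, X i) ω)) μ :=
    hindep.integrable_exp_mul_sum hX fun i _ =>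
      integrable_exp_mul_of_abs_le (hX i).aemeasurable (hX1 i) l
  calc μ.real {ω | T ≤ ∑ i, X i ω} = μ.real {ω | T ≤ (∑ i, X i) ω} := by
        simp only [Finset.sum_apply]
    _ ≤ exp (-l * T) * mgf (∑ i, X i) μ l := measure_ge_le_exp_mul_mgf T hl0 hint
    _ ≤ exp (-l * T) * exp (l ^ 2 * V) := by gcongr
    _ = exp (-(T ^ 2 / (4 * V))) := by
        rw [← exp_add]
        congr 1
        simp only [l]
        field_simp
        ring

lemma measureReal_le_abs_sum_le_exp (hindep : iIndepFun X μ) (hX : ∀ i, Measurable (X i))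
    (hX1 : ∀ i, ∀ᵐ ω ∂μ, |X i ω| ≤ 1) (hX0 : ∀ i, μ[X i] = 0) (hV : 0 < V)
    (hvar : ∑ i, Var[X i; μ] ≤ V) (hT : 0 ≤ T) (hTV : T ≤ 2 * V) :
    μ.real {ω | T ≤ |∑ i, X i ω|} ≤ 2 * exp (-(T ^ 2 / (4 * V))) := by
  have hupper := measureReal_le_sum_le_exp hindep hX hX1 hX0 hV hvar hT hTV
  have hlower := measureReal_le_sum_le_exp (X := fun i ω => -X i ω)
    (hindep.comp (fun _ x => -x) fun _ => measurable_neg) (fun i => (hX i).neg)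
    (by simpa only [abs_neg] using hX1) (by simp [integral_neg, hX0]) hV
    (by simpa only [variance_fun_neg] using hvar) hT hTV
  rw [two_mul]
  exact measureReal_le_add_of_subset_union (fun ω (hω : T ≤ |∑ i, X i ω|) => by
    simpa only [Set.mem_union, Set.mem_ofPred_eq, Finset.sum_neg_distrib] using le_abs.1 hω)
    hupper hlower

lemma measureReal_pi_le_abs_sum_le_exp [Nonempty ι] {f : Ω → ℝ} {t v : ℝ} (hf : Measurable f)
    (hf1 : ∀ ω, |f ω| ≤ 1) (hf0 : μ[f] = 0) (hv : 0 < v) (hvar : Var[f; μ] ≤ v) (ht : 0 ≤ t)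
    (htv : t ≤ 2 * v) :
    (Measure.pi fun _ : ι => μ).real {z | Fintype.card ι * t ≤ |∑ i, f (z i)|}
      ≤ 2 * exp (-(Fintype.card ι * t ^ 2 / (4 * v))) := by
  set n : ℝ := (Fintype.card ι : ℝ)
  have hn : 0 < n := by simp [n, Fintype.card_pos]
  have hsum : ∑ i : ι, Var[fun z => f (z i); Measure.pi fun _ => μ] ≤ n * v := by
    refine (Finset.sum_le_card_nsmul _ _ v fun i _ => ?_).trans_eq (by simp [n])
    exact ((measurePreserving_eval (fun _ : ι => μ) i).variance_fun_comp
      hf.aemeasurable).trans_le hvar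
  have hindep : iIndepFun (fun (i : ι) (z : ι → Ω) => f (z i)) (Measure.pi fun _ => μ) :=
    iIndepFun_pi fun _ => hf.aemeasurable
  have hmean : ∀ i : ι, ∫ z : ι → Ω, f (z i) ∂(Measure.pi fun _ => μ) = 0 := fun i =>
    (integral_comp_eval hf.aestronglyMeasurable).trans hf0
  have hexponent : (n * t) ^ 2 / (4 * (n * v)) = n * t ^ 2 / (4 * v) := by field_simp
  rw [← hexponent]
  exact measureReal_le_abs_sum_le_exp hindep (fun i => hf.comp (measurable_pi_apply i))
    (fun i => ae_of_all _ fun z => hf1 (z i)) hmean (by positivity) hsum (by positivity)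
    (by linarith [mul_le_mul_of_nonneg_left htv hn.le])

lemma variance_indicator_one_le {A : Set Ω} (hA : MeasurableSet A) :
    Var[A.indicator 1; μ] ≤ μ.real A * (1 - μ.real A) := by
  have hmem : ∀ᵐ ω ∂μ, A.indicator (1 : Ω → ℝ) ω ∈ Set.Icc 0 1 := ae_of_all _ fun ω =>
    ⟨Set.indicator_nonneg (fun _ _ => zero_le_one) ω,
      Set.indicator_le_self' (fun _ _ => zero_le_one) ω⟩
  refine (variance_le_sub_mul_sub hmem (measurable_one.indicator hA).aemeasurable).trans_eq ?_
  rw [integral_indicator_one hA]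
  ring

end Chernoff

section EmpiricalMeasure

open ProbabilityTheory

variable {Ω ι : Type*} [MeasurableSpace Ω] [Fintype ι] {A L U : Set Ω}

/-- The deviation, on the set `A`, of the empirical measure of the points `z i` from `μ`. -/
noncomputable def empiricalDeviation (μ : Measure Ω) (A : Set Ω) (z : ι → Ω) : ℝ :=
  (∑ i, A.indicator 1 (z i)) / Fintype.card ι - μ.real A

lemma sum_indicator_sub_eq_card_mul_empiricalDeviation [Nonempty ι] (μ : Measure Ω) (A : Set Ω)
    (z : ι → Ω) :
    ∑ i, (A.indicator 1 (z i) - μ.real A) = Fintype.card ι * empiricalDeviation μ A z := by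
  rw [Finset.sum_sub_distrib, empiricalDeviation, mul_sub, mul_div_cancel₀ _ (by simp)]
  simp

lemma empiricalDeviation_le_of_subset (μ : Measure Ω) (h : A ⊆ U) (z : ι → Ω) :
    empiricalDeviation μ A z ≤ empiricalDeviation μ U z + (μ.real U - μ.real A) := by
  have hind : ∀ ω, A.indicator (1 : Ω → ℝ) ω ≤ U.indicator 1 ω :=
    Set.indicator_le_indicator_of_subset h fun _ => zero_le_one
  have hsum : (∑ i, A.indicator (1 : Ω → ℝ) (z i)) / Fintype.card ι
      ≤ (∑ i, U.indicator (1 : Ω → ℝ) (z i)) / Fintype.card ι := by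
    gcongr ?_ / _
    exact Finset.sum_le_sum fun i _ => hind (z i)
  simp only [empiricalDeviation]
  linarith

lemma empiricalDeviation_eq_add_sdiff (μ : Measure Ω) [IsFiniteMeasure μ]
    (hL : MeasurableSet L) (h : L ⊆ A) (z : ι → Ω) :
    empiricalDeviation μ A z = empiricalDeviation μ L z + empiricalDeviation μ (A \ L) z := by
  have hind : ∀ i, A.indicator (1 : Ω → ℝ) (z i)
      = L.indicator 1 (z i) + (A \ L).indicator 1 (z i) := fun i => by
    have hdisj := Set.indicator_union_of_disjoint (disjoint_sdiff_self_right (x := L) (y := A))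
      (1 : Ω → ℝ)
    rw [Set.union_sdiff_cancel h] at hdisj
    exact congrFun hdisj (z i)
  have hreal : μ.real (A \ L) = μ.real A - μ.real L := measureReal_sdiff h hL
  simp only [empiricalDeviation, hind, Finset.sum_add_distrib, hreal]
  ring

lemma abs_empiricalDeviation_le_of_between (μ : Measure Ω) [IsFiniteMeasure μ]
    (hL : MeasurableSet L) (hLA : L ⊆ A) (hAU : A ⊆ U) (z : ι → Ω) :
    |empiricalDeviation μ A z|
      ≤ |empiricalDeviation μ L z| + |empiricalDeviation μ (U \ L) z| + μ.real (U \ L) := by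
  have hlower := empiricalDeviation_le_of_subset μ hLA z
  have hupper := empiricalDeviation_le_of_subset μ hAU z
  rw [empiricalDeviation_eq_add_sdiff μ hL (hLA.trans hAU)] at hupper
  have hwidth : μ.real (U \ L) = μ.real U - μ.real L := measureReal_sdiff (hLA.trans hAU) hL
  have hLA' : μ.real L ≤ μ.real A := measureReal_mono hLA
  have hAU' : μ.real A ≤ μ.real U := measureReal_mono hAU
  have hdevL := abs_le.1 (le_refl |empiricalDeviation μ L z|)
  have hdevUL := abs_le.1 (le_refl |empiricalDeviation μ (U \ L) z|)
  exact abs_le.2 ⟨by linarith, by linarith⟩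

lemma abs_empiricalDeviation_le_one (μ : Measure Ω) [IsProbabilityMeasure μ] (A : Set Ω)
    (z : ι → Ω) : |empiricalDeviation μ A z| ≤ 1 := by
  have hsum0 : 0 ≤ ∑ i, A.indicator (1 : Ω → ℝ) (z i) :=
    Finset.sum_nonneg fun i _ => Set.indicator_nonneg (fun _ _ => zero_le_one) (z i)
  have hsum1 : ∑ i, A.indicator (1 : Ω → ℝ) (z i) ≤ Fintype.card ι := by
    refine (Finset.sum_le_card_nsmul _ _ 1 fun i _ => ?_).trans_eq (by simp)
    exact Set.indicator_le_self' (fun _ _ => zero_le_one) (z i)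
  exact abs_sub_le_of_nonneg_of_le (by positivity)
    (div_le_one_of_le₀ hsum1 (Nat.cast_nonneg _)) measureReal_nonneg measureReal_le_one

/-- The bound `2 exp (-n t² / (4 v))` for the probability that the empirical measure of `n` points
deviates by more than `t` on a set whose indicator has variance at most `v`. -/
noncomputable def chernoffTail (n : ℕ) (v t : ℝ) : ℝ :=
  2 * exp (-(n * t ^ 2 / (4 * v)))

variable {μ : Measure Ω} [IsProbabilityMeasure μ] [Nonempty ι] {v t : ℝ}

lemma measureReal_lt_abs_empiricalDeviation_le (hA : MeasurableSet A) (hv : 0 < v)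
    (hvar : μ.real A * (1 - μ.real A) ≤ v) (ht : 0 ≤ t) (htv : t ≤ 2 * v) :
    (Measure.pi fun _ : ι => μ).real {z | t < |empiricalDeviation μ A z|}
      ≤ chernoffTail (Fintype.card ι) v t := by
  set f : Ω → ℝ := fun ω => A.indicator 1 ω - μ.real A
  have hind : Measurable (A.indicator (1 : Ω → ℝ)) := measurable_one.indicator hA
  have hf1 : ∀ ω, |f ω| ≤ 1 := fun ω => by
    have hp0 : 0 ≤ μ.real A := measureReal_nonneg
    have hp1 : μ.real A ≤ 1 := measureReal_le_one
    by_cases h : ω ∈ A <;> simp [f, h, abs_of_nonneg, hp0, hp1]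
  have hf0 : ∫ ω, f ω ∂μ = 0 := by
    rw [integral_sub ((integrable_const 1).indicator hA) (integrable_const _),
      integral_indicator_one hA]
    simp
  have hfvar : Var[f; μ] ≤ v :=
    (variance_sub_const hind.aestronglyMeasurable _).trans_le
      ((variance_indicator_one_le hA).trans hvar)
  have hsub : {z : ι → Ω | t < |empiricalDeviation μ A z|}
      ⊆ {z | Fintype.card ι * t ≤ |∑ i, f (z i)|} := fun z hz => by
    simp only [Set.mem_ofPred_eq, f, sum_indicator_sub_eq_card_mul_empiricalDeviation, abs_mul,
      Nat.abs_cast] at hz ⊢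
    gcongr
  exact (measureReal_mono hsub).trans
    (measureReal_pi_le_abs_sum_le_exp (hind.sub_const _) hf1 hf0 hv hfvar ht htv)

lemma measureReal_exists_lt_abs_empiricalDeviation_le {κ : Type*} {B : Finset κ} {A : κ → Set Ω}
    (hA : ∀ b ∈ B, MeasurableSet (A b)) (hv : 0 < v)
    (hvar : ∀ b ∈ B, μ.real (A b) * (1 - μ.real (A b)) ≤ v) (ht : 0 ≤ t) (htv : t ≤ 2 * v) :
    (Measure.pi fun _ : ι => μ).real {z | ∃ b ∈ B, t < |empiricalDeviation μ (A b) z|}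
      ≤ B.card * chernoffTail (Fintype.card ι) v t := by
  have hunion : {z : ι → Ω | ∃ b ∈ B, t < |empiricalDeviation μ (A b) z|}
      = ⋃ b ∈ B, {z | t < |empiricalDeviation μ (A b) z|} := by
    ext
    simp only [Set.mem_ofPred_eq, Set.mem_iUnion, exists_prop]
  rw [hunion, ← nsmul_eq_mul]
  exact (measureReal_biUnion_finset_le _ _).trans <| Finset.sum_le_card_nsmul _ _ _ fun b hb =>
    measureReal_lt_abs_empiricalDeviation_le (hA b hb) hv (hvar b hb) ht htv

end EmpiricalMeasure

section Chaining

variable {Ω ι : Type*} [MeasurableSpace Ω] [Fintype ι]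

/-- `B` is a finite `ε`-bracketing of the class `C`: its members `(L, U)` satisfy `μ (U \ L) ≤ ε`,
and every set of `C` lies between the two sets of some member. The lower brackets are required to be
in `C` themselves, so that they can be bracketed again at a coarser scale. -/
structure IsBracketing (μ : Measure Ω) (C : Set (Set Ω)) (ε : ℝ) (B : Finset (Set Ω × Set Ω)) :
    Prop where
  lower_mem : ∀ b ∈ B, b.1 ∈ C
  measurableSet_upper : ∀ b ∈ B, MeasurableSet b.2
  measureReal_sdiff_le : ∀ b ∈ B, μ.real (b.2 \ b.1) ≤ ε
  exists_between : ∀ A ∈ C, ∃ b ∈ B, b.1 ⊆ A ∧ A ⊆ b.2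

lemma measureReal_mul_one_sub_le {μ : Measure Ω} {A : Set Ω} {v : ℝ} (h : μ.real A ≤ v) :
    μ.real A * (1 - μ.real A) ≤ v := by
  nlinarith [sq_nonneg (μ.real A)]

variable {μ : Measure Ω} [IsProbabilityMeasure μ] [Nonempty ι] {C : Set (Set Ω)}
  {B : ℕ → Finset (Set Ω × Set Ω)} {v t : ℕ → ℝ} {K : ℕ}

/-- Each lower bracket `L` of level `K + 1` contains a lower bracket `L'` of level `K`, and the
link `L \ L'` has small measure and hence a good tail bound. -/
lemma measureReal_exists_lower_deviation_le (hC : ∀ A ∈ C, MeasurableSet A)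
    (hB : ∀ i, IsBracketing μ C (v (i + 1)) (B i)) (hv : ∀ i, 0 < v i) (hv0 : 1 / 4 ≤ v 0)
    (ht : ∀ i, 0 ≤ t i) (htv : ∀ i ≤ K, t i ≤ 2 * v i) :
    (Measure.pi fun _ : ι => μ).real
        {z | ∃ b ∈ B K, ∑ i ∈ Finset.range (K + 1), t i < |empiricalDeviation μ b.1 z|}
      ≤ ∑ i ∈ Finset.range (K + 1), (B i).card * chernoffTail (Fintype.card ι) (v i) (t i) := by
  induction K with
  | zero =>
    simp only [zero_add, Finset.sum_range_one]
    exact measureReal_exists_lt_abs_empiricalDeviation_le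
      (fun b hb => hC _ ((hB 0).lower_mem b hb)) (hv 0)
      (fun b _ => by nlinarith [sq_nonneg (μ.real b.1 - 1 / 2)]) (ht 0) (htv 0 le_rfl)
  | succ K ih =>
    choose! parent hparent hlower hupper using (hB K).exists_between
    have hmem : ∀ b ∈ B (K + 1), b.1 ∈ C := (hB (K + 1)).lower_mem
    have hmeas : ∀ b ∈ B (K + 1), MeasurableSet (parent b.1).1 := fun b hb =>
      hC _ ((hB K).lower_mem _ (hparent _ (hmem b hb)))
    have hlink : ∀ b ∈ B (K + 1), μ.real (b.1 \ (parent b.1).1) ≤ v (K + 1) := fun b hb =>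
      (measureReal_mono (Set.sdiff_subset_sdiff_left (hupper _ (hmem b hb)))).trans
        ((hB K).measureReal_sdiff_le _ (hparent _ (hmem b hb)))
    have hlinks := measureReal_exists_lt_abs_empiricalDeviation_le (ι := ι)
      (fun b hb => (hC _ (hmem b hb)).diff (hmeas b hb)) (hv (K + 1))
      (fun b hb => measureReal_mul_one_sub_le (hlink b hb)) (ht (K + 1)) (htv (K + 1) le_rfl)
    have hprev := ih fun i hi => htv i (hi.trans K.le_succ)
    refine (measureReal_le_add_of_subset_union (fun z hz => ?_) hprev hlinks).trans_eq
      (Finset.sum_range_succ _ (K + 1)).symm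
    obtain ⟨b, hb, hdev⟩ := hz
    by_contra hnot
    simp only [Set.mem_union, Set.mem_ofPred_eq, not_or, not_exists, not_and, not_lt] at hnot
    rw [empiricalDeviation_eq_add_sdiff μ (hmeas b hb) (hlower _ (hmem b hb)),
      Finset.sum_range_succ] at hdev
    linarith [abs_add_le (empiricalDeviation μ (parent b.1).1 z)
      (empiricalDeviation μ (b.1 \ (parent b.1).1) z), hnot.1 _ (hparent _ (hmem b hb)),
      hnot.2 b hb]

lemma measureReal_exists_deviation_le_of_isBracketing (hC : ∀ A ∈ C, MeasurableSet A)
    (hB : ∀ i, IsBracketing μ C (v (i + 1)) (B i)) (hv : ∀ i, 0 < v i) (hv0 : 1 / 4 ≤ v 0)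
    (ht : ∀ i, 0 ≤ t i) (htv : ∀ i ≤ K + 1, t i ≤ 2 * v i) :
    (Measure.pi fun _ : ι => μ).real
        {z | ∃ A ∈ C,
          ∑ i ∈ Finset.range (K + 2), t i + v (K + 1) < |empiricalDeviation μ A z|}
      ≤ ∑ i ∈ Finset.range (K + 1), (B i).card * chernoffTail (Fintype.card ι) (v i) (t i)
        + (B K).card * chernoffTail (Fintype.card ι) (v (K + 1)) (t (K + 1)) := by
  have hmeas : ∀ b ∈ B K, MeasurableSet b.1 := fun b hb => hC _ ((hB K).lower_mem b hb)
  have hlower := measureReal_exists_lower_deviation_le (ι := ι) hC hB hv hv0 ht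
    fun i hi => htv i (hi.trans K.le_succ)
  have hwidth := measureReal_exists_lt_abs_empiricalDeviation_le (ι := ι)
    (fun b hb => ((hB K).measurableSet_upper b hb).diff (hmeas b hb)) (hv (K + 1))
    (fun b hb => measureReal_mul_one_sub_le ((hB K).measureReal_sdiff_le b hb)) (ht (K + 1))
    (htv (K + 1) le_rfl)
  refine measureReal_le_add_of_subset_union (fun z hz => ?_) hlower hwidth
  obtain ⟨A, hA, hdev⟩ := hz
  obtain ⟨b, hb, hbA, hAb⟩ := (hB K).exists_between A hA
  by_contra hnot
  simp only [Set.mem_union, Set.mem_ofPred_eq, not_or, not_exists, not_and, not_lt] at hnot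
  rw [Finset.sum_range_succ] at hdev
  linarith [abs_empiricalDeviation_le_of_between μ (hmeas b hb) hbA hAb z, hnot.1 b hb,
    hnot.2 b hb, (hB K).measureReal_sdiff_le b hb]

end Chaining

section AnchoredBoxes

variable {d : Type*}

/-- The boxes `[0, x]` with `x` in the unit cube, together with the empty set, which serves as lower
bracket of the boxes of small volume. -/
def anchoredBoxes (d : Type*) : Set (Set (d → ℝ)) :=
  insert ∅ (Set.Icc 0 '' Set.Icc 0 1)

lemma measurableSet_of_mem_anchoredBoxes [Countable d] {A : Set (d → ℝ)}
    (hA : A ∈ anchoredBoxes d) : MeasurableSet A := by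
  rcases hA with rfl | ⟨x, -, rfl⟩
  · exact MeasurableSet.empty
  · exact measurableSet_Icc

/-- The point of the geometric grid of ratio `g` with exponent vector `k`. -/
def gridPoint (g : ℝ) (k : d → ℕ) : d → ℝ := fun i => g ^ k i

lemma gridPoint_nonneg {g : ℝ} {k : d → ℕ} (hg : 0 ≤ g) : 0 ≤ gridPoint g k :=
  fun i => pow_nonneg hg (k i)

lemma gridPoint_antitone {g : ℝ} (hg0 : 0 ≤ g) (hg1 : g ≤ 1) : Antitone (gridPoint (d := d) g) :=
  fun _ _ h i => pow_le_pow_of_le_one hg0 hg1 (h i)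

lemma gridPoint_le_one {g : ℝ} {k : d → ℕ} (hg0 : 0 ≤ g) (hg1 : g ≤ 1) : gridPoint g k ≤ 1 :=
  fun _ => pow_le_one₀ hg0 hg1

variable [Fintype d]

/-- The uniform distribution on the unit cube with coordinates indexed by `d`, as a measure on
`d → ℝ`. -/
noncomputable abbrev cubeMeasure (d : Type*) [Fintype d] : Measure (d → ℝ) :=
  Measure.pi fun _ => volume.restrict (Set.Icc (0 : ℝ) 1)

instance : IsProbabilityMeasure (volume.restrict (Set.Icc (0 : ℝ) 1)) :=
  ⟨by simp⟩

lemma cubeMeasure_real_Icc {x : d → ℝ} (hx0 : 0 ≤ x) (hx1 : x ≤ 1) :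
    (cubeMeasure d).real (Set.Icc 0 x) = ∏ i, x i := by
  rw [Measure.real, ← Set.pi_univ_Icc, Measure.pi_pi, ENNReal.toReal_prod]
  refine Finset.prod_congr rfl fun i _ => ?_
  have hinter : Set.Icc 0 (x i) ∩ Set.Icc 0 1 = Set.Icc 0 (x i) :=
    Set.inter_eq_self_of_subset_left (Set.Icc_subset_Icc_right (hx1 i))
  rw [Measure.restrict_apply measurableSet_Icc, Pi.zero_apply, hinter, Real.volume_Icc, sub_zero,
    ENNReal.toReal_ofReal (hx0 i)]

open Classical in
/-- The exponent vectors `k : d → ℕ` with `∑ i, k i ≤ M`, encoded with a slack coordinate `none`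
that brings the sum to exactly `M`. -/
noncomputable def natSimplex (d : Type*) [Fintype d] (M : ℕ) : Finset (d → ℕ) :=
  ((Finset.univ : Finset (Option d)).finsuppAntidiag M).image fun k i => k (some i)

lemma mem_natSimplex {M : ℕ} {k : d → ℕ} :
    k ∈ natSimplex d M ↔ ∑ i, k i ≤ M := by
  simp only [natSimplex, Finset.mem_image, Finset.mem_finsuppAntidiag, Fintype.sum_option]
  constructor
  · rintro ⟨k', ⟨hsum, -⟩, rfl⟩
    exact hsum ▸ Nat.le_add_left _ _
  · intro hk
    exact ⟨Finsupp.equivFunOnFinite.symm fun o => o.elim (M - ∑ i, k i) k,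
      ⟨by simp [hk], Finset.subset_univ _⟩, rfl⟩

lemma card_natSimplex_le (M : ℕ) :
    (natSimplex d M).card ≤ (Fintype.card d + M).choose (Fintype.card d) := by
  classical
  refine Finset.card_image_le.trans_eq ?_
  rw [Finset.card_finsuppAntidiag_nat_eq_choose, Finset.card_univ, Fintype.card_option]
  have h : Fintype.card d + 1 + M - 1 = Fintype.card d + M := by omega
  rw [h, ← Nat.choose_symm_add]

lemma choose_add_mul_le_exp_mul_pow (s m : ℕ) :
    ((s + s * m).choose s : ℝ) ≤ (exp 1 * (m + 1)) ^ s :=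
  calc ((s + s * m).choose s : ℝ) ≤ ((s + s * m : ℕ) : ℝ) ^ s / (s.factorial : ℝ) :=
        Nat.choose_le_pow_div s _
    _ = (s : ℝ) ^ s / (s.factorial : ℝ) * (m + 1) ^ s := by
        rw [show ((s + s * m : ℕ) : ℝ) = s * (m + 1) by push_cast; ring, mul_pow]
        ring
    _ ≤ exp s * (m + 1) ^ s := by
        gcongr
        exact pow_div_factorial_le_exp _ s.cast_nonneg s
    _ = (exp 1 * (m + 1)) ^ s := by rw [mul_pow, exp_one_pow]

lemma exists_le_sum_eq {k : d → ℕ} {M : ℕ} (h : M ≤ ∑ i, k i) : ∃ k' ≤ k, ∑ i, k' i = M := by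
  obtain ⟨k', hk', hdegree⟩ := Finsupp.exists_le_degree_eq (Finsupp.equivFunOnFinite.symm k) M
    (by simpa [Finsupp.degree_eq_sum] using h)
  exact ⟨k', fun i => hk' i, by simpa [Finsupp.degree_eq_sum] using hdegree⟩

/-- The lower bracket paired with the upper bracket `[0, gridPoint g k]`: the next smaller box of
the grid, or the empty set once the exponents sum to `M`. -/
def lowerBox (g : ℝ) (M : ℕ) (k : d → ℕ) : Set (d → ℝ) :=
  if ∑ i, k i < M then Set.Icc 0 (gridPoint g (k + 1)) else ∅

open Classical in
/-- The bracketing of the anchored boxes by the boxes of the geometric grid of ratio `g` whose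
volume is at least `g ^ M`. -/
noncomputable def gridBracketing (d : Type*) [Fintype d] (g : ℝ) (M : ℕ) :
    Finset (Set (d → ℝ) × Set (d → ℝ)) :=
  (natSimplex d M).image fun k => (lowerBox g M k, Set.Icc 0 (gridPoint g k))

section Grid

variable {g ε : ℝ} {M : ℕ} {k : d → ℕ}

lemma cubeMeasure_real_Icc_gridPoint (hg0 : 0 ≤ g) (hg1 : g ≤ 1) :
    (cubeMeasure d).real (Set.Icc 0 (gridPoint g k)) = g ^ ∑ i, k i := by
  rw [cubeMeasure_real_Icc (gridPoint_nonneg hg0) (gridPoint_le_one hg0 hg1)]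
  exact Finset.prod_pow_eq_pow_sum _ _ _

lemma lowerBox_mem_anchoredBoxes (hg0 : 0 ≤ g) (hg1 : g ≤ 1) :
    lowerBox g M k ∈ anchoredBoxes d := by
  unfold lowerBox
  split_ifs
  · exact Or.inr ⟨_, ⟨gridPoint_nonneg hg0, gridPoint_le_one hg0 hg1⟩, rfl⟩
  · exact Or.inl rfl

lemma measureReal_Icc_gridPoint_sdiff_lowerBox_le (hg0 : 0 ≤ g) (hg1 : g ≤ 1)
    (hgε : 1 - ε ≤ g ^ Fintype.card d) (hgM : g ^ M ≤ ε) (hk : ∑ i, k i ≤ M) :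
    (cubeMeasure d).real (Set.Icc 0 (gridPoint g k) \ lowerBox g M k) ≤ ε := by
  unfold lowerBox
  split_ifs with h
  · have hsub : Set.Icc 0 (gridPoint g (k + 1)) ⊆ Set.Icc 0 (gridPoint g k) :=
      Set.Icc_subset_Icc_right (gridPoint_antitone hg0 hg1 (by simp))
    have hexponent : ∑ i, (k + 1) i = ∑ i, k i + Fintype.card d := by
      simp [Finset.sum_add_distrib]
    have hpow : g ^ ∑ i, k i ≤ 1 := pow_le_one₀ hg0 hg1
    have hcard : g ^ Fintype.card d ≤ 1 := pow_le_one₀ hg0 hg1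
    rw [measureReal_sdiff hsub measurableSet_Icc, cubeMeasure_real_Icc_gridPoint hg0 hg1,
      cubeMeasure_real_Icc_gridPoint hg0 hg1, hexponent, pow_add]
    nlinarith [mul_nonneg (sub_nonneg.2 hpow) (sub_nonneg.2 hcard)]
  · rwa [Set.sdiff_empty, cubeMeasure_real_Icc_gridPoint hg0 hg1,
      show ∑ i, k i = M from hk.antisymm (not_lt.1 h)]

/-- Capping the exponents at `M` keeps them finite where `x i = 0`. -/
lemma exists_gridPoint_between {x : d → ℝ} (hx : x ≤ 1) (g : ℝ) (M : ℕ) :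
    ∃ k : d → ℕ, x ≤ gridPoint g k ∧ (∑ i, k i < M → gridPoint g (k + 1) ≤ x) := by
  refine ⟨fun i => Nat.findGreatest (fun j => x i ≤ g ^ j) M, fun i => ?_, fun hsum i => ?_⟩
  · exact Nat.findGreatest_spec (P := fun j => x i ≤ g ^ j) M.zero_le (by simpa using hx i)
  · have hlt : Nat.findGreatest (fun j => x i ≤ g ^ j) M < M :=
      (Finset.single_le_sum (f := fun i => Nat.findGreatest (fun j => x i ≤ g ^ j) M)
        (fun _ _ => Nat.zero_le _) (Finset.mem_univ i)).trans_lt hsum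
    exact (not_le.1 (Nat.findGreatest_is_greatest (P := fun j => x i ≤ g ^ j) (Nat.lt_succ_self _)
      hlt)).le

lemma exists_lowerBox_subset_subset_Icc [Nonempty d] (hg0 : 0 ≤ g) (hg1 : g ≤ 1)
    {A : Set (d → ℝ)} (hA : A ∈ anchoredBoxes d) (M : ℕ) :
    ∃ k : d → ℕ, ∑ i, k i ≤ M ∧ lowerBox g M k ⊆ A ∧ A ⊆ Set.Icc 0 (gridPoint g k) := by
  have hempty : ∀ k : d → ℕ, M ≤ ∑ i, k i → A ⊆ Set.Icc 0 (gridPoint g k) →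
      ∃ k : d → ℕ, ∑ i, k i ≤ M ∧ lowerBox g M k ⊆ A ∧ A ⊆ Set.Icc 0 (gridPoint g k) := by
    intro k hk hAk
    obtain ⟨k', hk', hsum⟩ := exists_le_sum_eq hk
    exact ⟨k', hsum.le, by simp [lowerBox, hsum],
      hAk.trans (Set.Icc_subset_Icc_right (gridPoint_antitone hg0 hg1 hk'))⟩
  rcases hA with rfl | ⟨x, hx, rfl⟩
  · refine hempty (fun _ => M) ?_ (Set.empty_subset _)
    simpa using Nat.le_mul_of_pos_left M Fintype.card_pos
  · obtain ⟨k, hxk, hkx⟩ := exists_gridPoint_between hx.2 g M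
    rcases lt_or_ge (∑ i, k i) M with h | h
    · refine ⟨k, h.le, ?_, Set.Icc_subset_Icc_right hxk⟩
      rw [lowerBox, if_pos h]
      exact Set.Icc_subset_Icc_right (hkx h)
    · exact hempty k h (Set.Icc_subset_Icc_right hxk)

lemma isBracketing_gridBracketing [Nonempty d] (hg0 : 0 ≤ g) (hg1 : g ≤ 1)
    (hgε : 1 - ε ≤ g ^ Fintype.card d) (hgM : g ^ M ≤ ε) :
    IsBracketing (cubeMeasure d) (anchoredBoxes d) ε (gridBracketing d g M) where
  lower_mem := Finset.forall_mem_image.2 fun _ _ => lowerBox_mem_anchoredBoxes hg0 hg1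
  measurableSet_upper := Finset.forall_mem_image.2 fun _ _ => measurableSet_Icc
  measureReal_sdiff_le := Finset.forall_mem_image.2 fun _ hk =>
    measureReal_Icc_gridPoint_sdiff_lowerBox_le hg0 hg1 hgε hgM (mem_natSimplex.1 hk)
  exists_between := fun _ hA =>
    let ⟨_, hk, hlower, hupper⟩ := exists_lowerBox_subset_subset_Icc hg0 hg1 hA M
    ⟨_, Finset.mem_image_of_mem _ (mem_natSimplex.2 hk), hlower, hupper⟩

end Grid

lemma card_gridBracketing_le (d : Type*) [Fintype d] (g : ℝ) (m : ℕ) :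
    ((gridBracketing d g (Fintype.card d * m)).card : ℝ)
      ≤ (exp 1 * (m + 1)) ^ Fintype.card d := by
  refine le_trans ?_ (choose_add_mul_le_exp_mul_pow (Fintype.card d) m)
  exact_mod_cast Finset.card_image_le.trans (card_natSimplex_le (Fintype.card d * m))

lemma exists_isBracketing_anchoredBoxes (d : Type*) [Fintype d] [Nonempty d] {ε : ℝ} {m : ℕ}
    (hε : 0 ≤ ε) (hm : exp (-(ε * m)) ≤ ε) :
    ∃ B, IsBracketing (cubeMeasure d) (anchoredBoxes d) ε B ∧
      (B.card : ℝ) ≤ (exp 1 * (m + 1)) ^ Fintype.card d := by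
  set s := Fintype.card d
  set g := exp (-(ε / s))
  have hg1 : g ≤ 1 := exp_le_one_iff.2 (by simp only [Left.neg_nonpos_iff]; positivity)
  have hgs : g ^ s = exp (-ε) := by
    have hs : (s : ℝ) ≠ 0 := by simp [s]
    rw [← exp_nat_mul, mul_neg, mul_div_cancel₀ _ hs]
  have hgM : g ^ (s * m) ≤ ε := by
    rwa [pow_mul, hgs, ← exp_nat_mul, mul_neg, mul_comm]
  exact ⟨gridBracketing d g (s * m), isBracketing_gridBracketing (exp_nonneg _) hg1
    (hgs ▸ one_sub_le_exp_neg ε) hgM, card_gridBracketing_le d g m⟩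

end AnchoredBoxes

section Levels

/-- The variance bound for the links of level `i`. For `i + 1` it is the width of the brackets of
level `i`; at level `0` it is the bound `p * (1 - p) ≤ 1 / 4`. -/
noncomputable def linkVariance : ℕ → ℝ
  | 0 => 1 / 4
  | i + 1 => (1 / 4) ^ (i + 1)

/-- The deviation allowed for the links of level `i`, relative to the scale `R` of the total
deviation. -/
noncomputable def linkDeviation : ℕ → ℝ
  | 0 => 1
  | i + 1 => (1 / 2) ^ i * (1.21 + 0.2 * i)

/-- The ratio `linkDeviation i ^ 2 / (4 * linkVariance i)`, by which the exponent of the tail bound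
at level `i` grows. -/
noncomputable def linkExponent : ℕ → ℝ
  | 0 => 1
  | i + 1 => (1.21 + 0.2 * i) ^ 2

/-- The base of the bound `bracketCountBase i ^ s` for the number of brackets of level `i` in
dimension `s`. -/
noncomputable def bracketCountBase (i : ℕ) : ℝ :=
  exp 1 * (7 * (i + 1) * 4 ^ i)

lemma linkVariance_pos (i : ℕ) : 0 < linkVariance i := by
  cases i <;> simp only [linkVariance] <;> positivity

lemma linkDeviation_nonneg (i : ℕ) : 0 ≤ linkDeviation i := by
  cases i <;> simp only [linkDeviation] <;> positivity

lemma one_le_linkExponent (i : ℕ) : 1 ≤ linkExponent i := by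
  cases i with
  | zero => exact le_rfl
  | succ i => exact one_le_pow₀ (by linarith [i.cast_nonneg (α := ℝ)])

lemma linkDeviation_sq (i : ℕ) : linkDeviation i ^ 2 = 4 * linkVariance i * linkExponent i := by
  cases i with
  | zero => norm_num [linkDeviation, linkVariance, linkExponent]
  | succ i =>
    have hpow : (1 / 4 : ℝ) ^ i = ((1 / 2) ^ i) ^ 2 := by rw [pow_right_comm]; norm_num
    simp only [linkDeviation, linkVariance, linkExponent, pow_succ (1 / 4 : ℝ) i, hpow]
    ring

lemma sum_linkDeviation (K : ℕ) :
    ∑ i ∈ Finset.range (K + 1), linkDeviation i = 3.82 - (1 / 2) ^ K * (2.82 + 0.4 * K) := by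
  induction K with
  | zero => norm_num [linkDeviation]
  | succ K ih =>
    rw [Finset.sum_range_succ, ih]
    simp only [linkDeviation, pow_succ]
    push_cast
    ring

lemma sum_linkDeviation_le (K : ℕ) : ∑ i ∈ Finset.range (K + 1), linkDeviation i ≤ 3.82 := by
  rw [sum_linkDeviation]
  exact sub_le_self _ (by positivity)

lemma bracketCountBase_nonneg (i : ℕ) : 0 ≤ bracketCountBase i := by
  simp only [bracketCountBase]
  positivity

lemma bracketCountBase_monotone : Monotone bracketCountBase := fun i j h => by
  simp only [bracketCountBase]
  gcongr
  norm_num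

lemma le_exp_of_pow_le {x r : ℝ} {m n : ℕ} (hn : n ≠ 0) (hx : x ^ n ≤ 2.7182818283 ^ m)
    (hmn : m ≤ n * r) : x ≤ exp r := by
  refine le_of_pow_le_pow_left₀ hn (exp_nonneg r) ?_
  calc x ^ n ≤ 2.7182818283 ^ m := hx
    _ ≤ exp 1 ^ m := by gcongr; exact exp_one_gt_d9.le
    _ = exp m := exp_one_pow m
    _ ≤ exp (n * r) := exp_le_exp.2 hmn
    _ = exp r ^ n := exp_nat_mul r n

/-- The inequality that fixes the constant `4.9` and the sequence `linkDeviation`: the tail exponent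
of level `i` absorbs the number of brackets, a factor `2` for the two tails, and the factor
`2 ^ (i + 1)` which makes the bounds summable over the levels. -/
lemma two_pow_mul_bracketCountBase_le (i : ℕ) :
    2 ^ (i + 2) * bracketCountBase i ≤ exp (4.9 * linkExponent i) := by
  cases i with
  | zero =>
    have h28 : 28 ≤ exp 3.9 := le_exp_of_pow_le (m := 39) (n := 10) (by simp) (by norm_num)
      (by norm_num)
    calc (2 : ℝ) ^ (0 + 2) * bracketCountBase 0 = exp 1 * 28 := by
          simp only [bracketCountBase]; norm_num; ring
      _ ≤ exp 1 * exp 3.9 := by gcongr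
      _ = exp (4.9 * linkExponent 0) := by rw [← exp_add]; simp only [linkExponent]; norm_num
  | succ i =>
    have h448 : 448 ≤ exp 6.1125 := le_exp_of_pow_le (m := 55) (n := 9) (by simp) (by norm_num)
      (by norm_num)
    have h8 : 8 ≤ exp 2.08 := le_exp_of_pow_le (m := 52) (n := 25) (by simp) (by norm_num)
      (by norm_num)
    have hlin : 1 + (i : ℝ) / 2 ≤ exp (i / 2) := by linarith [add_one_le_exp ((i : ℝ) / 2)]
    have hpow : (8 : ℝ) ^ i = 2 ^ i * 4 ^ i := by rw [← mul_pow]; norm_num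
    calc (2 : ℝ) ^ (i + 1 + 2) * bracketCountBase (i + 1)
        = exp 1 * 448 * 8 ^ i * (1 + (i : ℝ) / 2) := by
          simp only [bracketCountBase, hpow, pow_succ]; push_cast; ring
      _ ≤ exp 1 * exp 6.1125 * exp 2.08 ^ i * exp (i / 2) := by gcongr
      _ = exp (1 + 6.1125 + i * 2.08 + i / 2) := by simp only [exp_add, exp_nat_mul]
      _ ≤ exp (4.9 * linkExponent (i + 1)) := by
          refine exp_le_exp.2 ?_
          simp only [linkExponent]
          nlinarith [sq_nonneg ((i : ℝ) - 0.53)]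

lemma two_pow_mul_bracketCountBase_pow_le (i : ℕ) {s : ℕ} (hs : s ≠ 0) :
    2 ^ (i + 2) * bracketCountBase i ^ s ≤ exp (s * (4.9 * linkExponent i)) := by
  have hb := bracketCountBase_nonneg i
  calc 2 ^ (i + 2) * bracketCountBase i ^ s
      ≤ (2 ^ (i + 2)) ^ s * bracketCountBase i ^ s := by
        gcongr
        exact le_self_pow₀ (one_le_pow₀ (by norm_num)) hs
    _ = (2 ^ (i + 2) * bracketCountBase i) ^ s := (mul_pow _ _ _).symm
    _ ≤ exp (4.9 * linkExponent i) ^ s := by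
        gcongr
        exact two_pow_mul_bracketCountBase_le i
    _ = exp (s * (4.9 * linkExponent i)) := (exp_nat_mul _ _).symm

lemma chernoffTail_level_le {s N i : ℕ} {R L : ℝ} (hs : s ≠ 0) (hL : 0 ≤ L)
    (hR : N * R ^ 2 = s * (4.9 + L)) :
    chernoffTail N (linkVariance i) (linkDeviation i * R)
      ≤ 2 * (exp (-(s * (4.9 * linkExponent i))) * exp (-L)) := by
  have hq : 1 ≤ s * linkExponent i :=
    one_le_mul_of_one_le_of_one_le (by exact_mod_cast hs.pos) (one_le_linkExponent i)
  have hexponent : N * (linkDeviation i * R) ^ 2 / (4 * linkVariance i)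
      = s * (4.9 * linkExponent i) + s * linkExponent i * L := by
    have hv := (linkVariance_pos i).ne'
    calc N * (linkDeviation i * R) ^ 2 / (4 * linkVariance i) = linkExponent i * (N * R ^ 2) := by
          rw [mul_pow, linkDeviation_sq]
          field_simp
      _ = s * (4.9 * linkExponent i) + s * linkExponent i * L := by
          rw [hR]
          ring
  rw [chernoffTail, hexponent, ← exp_add]
  gcongr
  linarith [le_mul_of_one_le_left hL hq]

lemma mul_chernoffTail_level_le {s N i : ℕ} {R L c : ℝ} (hs : s ≠ 0) (hL : 0 ≤ L)
    (hR : N * R ^ 2 = s * (4.9 + L)) (hc : c ≤ bracketCountBase i ^ s) :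
    c * chernoffTail N (linkVariance i) (linkDeviation i * R) ≤ (1 / 2) ^ (i + 1) * exp (-L) := by
  set E := s * (4.9 * linkExponent i)
  have htail0 : 0 ≤ chernoffTail N (linkVariance i) (linkDeviation i * R) :=
    mul_nonneg zero_le_two (exp_nonneg _)
  have hcount : c ≤ exp E / 2 ^ (i + 2) :=
    hc.trans ((le_div_iff₀' (by positivity)).2 (two_pow_mul_bracketCountBase_pow_le i hs))
  calc c * chernoffTail N (linkVariance i) (linkDeviation i * R)
      ≤ exp E / 2 ^ (i + 2) * (2 * (exp (-E) * exp (-L))) := by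
        gcongr
        exact chernoffTail_level_le hs hL hR
    _ = (1 / 2) ^ (i + 1) * exp (-L) := by
        rw [exp_neg E, one_div, inv_pow, pow_succ (2 : ℝ) (i + 1)]
        field_simp

lemma exp_neg_linkVariance_mul_le (i : ℕ) :
    exp (-(linkVariance (i + 1) * (6 * (i + 1) * 4 ^ i : ℕ))) ≤ linkVariance (i + 1) := by
  have h4 : 4 ≤ exp 1.5 := le_exp_of_pow_le (m := 3) (n := 2) (by simp) (by norm_num) (by norm_num)
  have hexponent : linkVariance (i + 1) * (6 * (i + 1) * 4 ^ i : ℕ) = (i + 1 : ℕ) * 1.5 := by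
    simp only [linkVariance, pow_succ, one_div, inv_pow]
    push_cast
    field_simp
    norm_num
  rw [hexponent, exp_neg, exp_nat_mul, linkVariance, one_div, inv_pow]
  gcongr

lemma exists_isBracketing_linkVariance (d : Type*) [Fintype d] [Nonempty d] (i : ℕ) :
    ∃ B, IsBracketing (cubeMeasure d) (anchoredBoxes d) (linkVariance (i + 1)) B ∧
      (B.card : ℝ) ≤ bracketCountBase i ^ Fintype.card d := by
  obtain ⟨B, hB, hcard⟩ := exists_isBracketing_anchoredBoxes d (linkVariance_pos (i + 1)).le
    (exp_neg_linkVariance_mul_le i)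
  refine ⟨B, hB, hcard.trans ?_⟩
  have h4 : (1 : ℝ) ≤ 4 ^ i := one_le_pow₀ (by norm_num)
  simp only [bracketCountBase]
  push_cast
  gcongr
  nlinarith [i.cast_nonneg (α := ℝ)]

lemma linkDeviation_succ_le (j : ℕ) : linkDeviation (j + 1) ≤ 1.21 := by
  have hbernoulli : 1 + (j : ℝ) ≤ 2 ^ j := by
    exact_mod_cast (Nat.add_comm 1 j).trans_le (Nat.lt_two_pow_self (n := j))
  calc linkDeviation (j + 1) = (1 / 2) ^ j * (1.21 + 0.2 * j) := rfl
    _ ≤ (1 / 2) ^ j * (1.21 * 2 ^ j) := by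
        gcongr
        linarith
    _ = 1.21 := by rw [mul_left_comm, ← mul_pow]; norm_num

lemma linkDeviation_add_two_le (j : ℕ) : linkDeviation (j + 2) ≤ 0.705 := by
  have hpow : (1 / 2 : ℝ) ^ j ≤ 1 := pow_le_one₀ (by norm_num) (by norm_num)
  have hrec : linkDeviation (j + 2) = linkDeviation (j + 1) / 2 + 0.1 * (1 / 2) ^ j := by
    simp only [linkDeviation, pow_succ]
    push_cast
    ring
  linarith [linkDeviation_succ_le j]

/-- The constant `1.88 = 5.7 - 3.82` is what the links of all levels leave for the bracket width. -/
lemma exists_last_level {R : ℝ} (hR0 : 0 < R) (hR1 : 5.7 * R < 1) :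
    ∃ K, linkVariance (K + 1) ≤ 1.88 * R ∧
      ∀ i ≤ K + 1, linkDeviation i * R ≤ 2 * linkVariance i := by
  classical
  have hex : ∃ K, linkVariance (K + 1) ≤ 1.88 * R := by
    obtain ⟨n, hn⟩ := exists_pow_lt_of_lt_one (show 0 < 1.88 * R by positivity)
      (show (1 / 4 : ℝ) < 1 by norm_num)
    exact ⟨n, (pow_le_pow_of_le_one (by norm_num) (by norm_num) n.le_succ).trans hn.le⟩
  refine ⟨Nat.find hex, Nat.find_spec hex, fun i hi => ?_⟩
  match i with
  | 0 => simp only [linkDeviation, linkVariance]; linarith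
  | 1 => simp only [linkDeviation, linkVariance]; norm_num; linarith
  | j + 2 =>
    have hbefore : 1.88 * R < linkVariance (j + 1) := not_le.1 (Nat.find_min hex (by omega))
    have hvar : linkVariance (j + 2) = linkVariance (j + 1) / 4 := by
      simp only [linkVariance, pow_succ]
      ring
    nlinarith [linkDeviation_add_two_le j]

end Levels

section DiscrepancyTail

variable {d ι : Type*} [Fintype d] [Nonempty d] [Fintype ι] [Nonempty ι] {R L : ℝ}

lemma sum_one_half_pow_succ_le_one (n : ℕ) : ∑ i ∈ Finset.range n, (1 / 2 : ℝ) ^ (i + 1) ≤ 1 := by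
  simp only [pow_succ, ← Finset.sum_mul]
  linarith [sum_geometric_two_le n]

lemma sum_level_bounds_le {B : ℕ → Finset (Set (d → ℝ) × Set (d → ℝ))} {N K : ℕ} (hL : 0 ≤ L)
    (hR : N * R ^ 2 = Fintype.card d * (4.9 + L))
    (hcard : ∀ i, ((B i).card : ℝ) ≤ bracketCountBase i ^ Fintype.card d) :
    ∑ i ∈ Finset.range (K + 1),
        (B i).card * chernoffTail N (linkVariance i) (linkDeviation i * R)
      + (B K).card * chernoffTail N (linkVariance (K + 1)) (linkDeviation (K + 1) * R)
      ≤ exp (-L) := by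
  have hlast : ((B K).card : ℝ) ≤ bracketCountBase (K + 1) ^ Fintype.card d :=
    (hcard K).trans (pow_le_pow_left₀ (bracketCountBase_nonneg K)
      (bracketCountBase_monotone K.le_succ) _)
  calc _ ≤ ∑ i ∈ Finset.range (K + 1), (1 / 2) ^ (i + 1) * exp (-L)
          + (1 / 2) ^ (K + 1 + 1) * exp (-L) :=
        add_le_add (Finset.sum_le_sum fun i _ =>
            mul_chernoffTail_level_le Fintype.card_ne_zero hL hR (hcard i))
          (mul_chernoffTail_level_le Fintype.card_ne_zero hL hR hlast)
    _ = (∑ i ∈ Finset.range (K + 2), (1 / 2) ^ (i + 1)) * exp (-L) := by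
        rw [Finset.sum_mul, ← Finset.sum_range_succ]
    _ ≤ exp (-L) := mul_le_of_le_one_left (exp_nonneg _) (sum_one_half_pow_succ_le_one _)

theorem measureReal_exists_anchoredBoxes_deviation_le (hL : 0 ≤ L) (hR0 : 0 < R)
    (hR : Fintype.card ι * R ^ 2 = Fintype.card d * (4.9 + L)) :
    (Measure.pi fun _ : ι => cubeMeasure d).real
        {z | ∃ A ∈ anchoredBoxes d, 5.7 * R < |empiricalDeviation (cubeMeasure d) A z|}
      ≤ exp (-L) := by
  rcases le_or_gt 1 (5.7 * R) with hbig | hsmall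
  · have hempty : {z : ι → d → ℝ | ∃ A ∈ anchoredBoxes d,
        5.7 * R < |empiricalDeviation (cubeMeasure d) A z|} = ∅ :=
      Set.eq_empty_of_forall_notMem fun z ⟨A, _, hA⟩ =>
        hA.not_ge ((abs_empiricalDeviation_le_one _ A z).trans hbig)
    rw [hempty, measureReal_empty]
    exact exp_nonneg _
  choose B hB hcard using exists_isBracketing_linkVariance d
  obtain ⟨K, hwidth, hrange⟩ := exists_last_level hR0 hsmall
  have hchain := measureReal_exists_deviation_le_of_isBracketing (ι := ι)
    (fun _ => measurableSet_of_mem_anchoredBoxes) hB linkVariance_pos le_rfl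
    (fun i => mul_nonneg (linkDeviation_nonneg i) hR0.le) hrange
  have hthreshold : ∑ i ∈ Finset.range (K + 2), linkDeviation i * R + linkVariance (K + 1)
      ≤ 5.7 * R := by
    rw [← Finset.sum_mul]
    linarith [mul_le_mul_of_nonneg_right (sum_linkDeviation_le (K + 1)) hR0.le]
  refine (measureReal_mono ?_).trans (hchain.trans (sum_level_bounds_le hL hR hcard))
  exact fun z ⟨A, hA, hdev⟩ => ⟨A, hA, hthreshold.trans_lt hdev⟩

end DiscrepancyTail

section StarDiscrepancy

variable {s N : ℕ}

lemma starDiscrepancy_eq_iSup_abs_empiricalDeviation (z : Fin N → Fin s → ℝ) :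
    starDiscrepancy s N z = ⨆ x : Set.Icc (0 : Fin s → ℝ) 1,
      |empiricalDeviation (cubeMeasure (Fin s)) (Set.Icc 0 (x : Fin s → ℝ)) z| := by
  classical
  refine iSup_congr fun x => ?_
  rw [empiricalDeviation, cubeMeasure_real_Icc x.2.1 x.2.2, Nat.card_eq_fintype_card,
    Fintype.card_subtype, Fintype.card_fin]
  simp only [Set.indicator_apply, Pi.one_apply, Finset.sum_boole]

lemma exists_anchoredBoxes_lt_abs_empiricalDeviation {z : Fin N → Fin s → ℝ} {r : ℝ}
    (h : r < starDiscrepancy s N z) :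
    ∃ A ∈ anchoredBoxes (Fin s), r < |empiricalDeviation (cubeMeasure (Fin s)) A z| := by
  have : Nonempty (Set.Icc (0 : Fin s → ℝ) 1) := ⟨⟨0, by simp⟩⟩
  rw [starDiscrepancy_eq_iSup_abs_empiricalDeviation] at h
  obtain ⟨x, hx⟩ := exists_lt_of_lt_ciSup h
  exact ⟨_, Or.inr ⟨x, x.2, rfl⟩, hx⟩

theorem measureReal_lt_starDiscrepancy_le (hs : s ≠ 0) (hN : N ≠ 0) {R L : ℝ} (hL : 0 ≤ L)
    (hR0 : 0 < R) (hR : N * R ^ 2 = s * (4.9 + L)) :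
    (Measure.pi fun _ : Fin N => cubeMeasure (Fin s)).real {z | 5.7 * R < starDiscrepancy s N z}
      ≤ exp (-L) := by
  have : NeZero s := ⟨hs⟩
  have : NeZero N := ⟨hN⟩
  exact (measureReal_mono fun _ => exists_anchoredBoxes_lt_abs_empiricalDeviation).trans
    (measureReal_exists_anchoredBoxes_deviation_le hL hR0 (by simpa using hR))

end StarDiscrepancy

theorem stmt_1 (s N : ℕ) (hs : 1 ≤ s) (hN : 1 ≤ N) (q : ℝ) (hq : q ∈ Set.Ioo (0:ℝ) 1) :
    ENNReal.ofReal q ≤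
      (Measure.pi fun _ : Fin N => Measure.pi fun _ : Fin s => volume.restrict (Set.Icc (0:ℝ) 1))
        {z : Fin N → Fin s → ℝ |
          starDiscrepancy s N z ≤
            5.7 * Real.sqrt (4.9 + Real.log (1 - q)⁻¹ ) * (Real.sqrt s / Real.sqrt N)} := by
  obtain ⟨hq0, hq1⟩ := hq
  have hs' : (0 : ℝ) < s := by exact_mod_cast hs
  have hN' : (0 : ℝ) < N := by exact_mod_cast hN
  set L := log (1 - q)⁻¹ with hLq
  have hL : 0 ≤ L := log_nonneg ((one_le_inv₀ (by linarith)).2 (by linarith))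
  have hexp : exp (-L) = 1 - q := by rw [hLq, log_inv, neg_neg, exp_log (by linarith)]
  have hR : N * (√(4.9 + L) * (√s / √N)) ^ 2 = s * (4.9 + L) := by
    rw [mul_pow, div_pow, sq_sqrt (by linarith), sq_sqrt hs'.le, sq_sqrt hN'.le]
    field_simp
  have htail := measureReal_lt_starDiscrepancy_le (by omega) (by omega) hL (by positivity) hR
  rw [hexp, ← mul_assoc] at htail
  refine ENNReal.ofReal_le_of_le_toReal ?_
  have hcover := measureReal_le_add_of_subset_union (A := Set.univ)
    (fun z _ => le_or_gt (starDiscrepancy s N z) _) le_rfl htail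
  rw [probReal_univ] at hcover
  exact le_of_add_le_add_right ((add_sub_cancel q 1).trans_le hcover)
end

section
/- For every dimension s ≥ 1 and every ε ∈ (0,1] there exists a positive integer N with N ≤ ⌈169 · s · ε^{−2}⌉ and a set of N points z_1, …, z_N in [0,1]^s whose star-discrepancy satisfies D*_N(z_1, …, z_N) ≤ ε. In particular, the inverse of the star-discrepancy satisfies n*(s, ε) ≤ ⌈169 · s · ε^{−2}⌉. -/
/-!
A sample of `N` independent uniform points works with positive probability, by chaining over
brackets of width `64⁻ᵏ`.

The class of boxes `[0, x]` has brackets of width `1 / a` whose corners lie on a geometric grid of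
ratio `exp (-1 / (s a))`. The exponents run over the lattice points of a simplex in dimension `s`,
so there are at most `(17 a²) ^ s` brackets: the division by `s!` in the volume of the simplex
cancels the growth of its side with `s`. Hence the logarithm of the number of links at level `k` is
`O(s (k + 1))`.

A link between the levels `k` and `k + 1` is a pair of sets differing by measure `O(64⁻ᵏ)`, so by
Bernstein's inequality its discrepancy exceeds `(16 / 25) ε 5⁻ᵏ` with probability at most
`2 exp (-17 s (64 / 25) ^ k)` as soon as `N ε² ≥ 169 s`. These probabilities, summed over all links,
are less than `1`, while the thresholds sum to `(4 / 5) ε`, which leaves `ε / 5` for the width of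
the last bracket.
-/

open MeasureTheory Real

open ProbabilityTheory unitInterval
open scoped symmDiff

section Bernstein

variable {Ω κ : Type*} {mΩ : MeasurableSpace Ω} {μ : Measure Ω}

lemma mgf_le_exp_of_abs_le_one [IsProbabilityMeasure μ] {X : Ω → ℝ} (hX : AEMeasurable X μ)
    (hb : ∀ᵐ ω ∂μ, |X ω| ≤ 1) {l : ℝ} (hl : |l| ≤ 1) :
    mgf X μ l ≤ exp (l * μ[X] + l ^ 2 * ∫ ω, X ω ^ 2 ∂μ) := by
  have hX_int : Integrable X μ := .of_bound hX.aestronglyMeasurable 1 hb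
  have hX2_int : Integrable (fun ω ↦ X ω ^ 2) μ := by
    refine .of_bound (hX.pow_const 2).aestronglyMeasurable 1 (hb.mono fun ω h ↦ ?_)
    simpa only [norm_pow, norm_eq_abs] using pow_le_one₀ (abs_nonneg _) h
  have hexp_int : Integrable (fun ω ↦ exp (l * X ω)) μ :=
    integrable_exp_mul_of_mem_Icc hX (hb.mono fun _ ↦ abs_le.1)
  calc mgf X μ l ≤ ∫ ω, (1 + l * X ω + l ^ 2 * X ω ^ 2) ∂μ := by
        refine integral_mono_ae hexp_int (by fun_prop) (hb.mono fun ω h ↦ ?_)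
        have hlX : |l * X ω| ≤ 1 := by
          simpa only [abs_mul] using mul_le_one₀ hl (abs_nonneg _) h
        have := le_of_abs_le (abs_exp_sub_one_sub_id_le hlX)
        simp only [mul_pow] at this ⊢
        linarith
    _ = l * μ[X] + l ^ 2 * ∫ ω, X ω ^ 2 ∂μ + 1 := by
        rw [integral_add (by fun_prop) (by fun_prop), integral_add (by fun_prop) (by fun_prop),
          integral_const_mul, integral_const_mul, integral_const, probReal_univ, one_smul]
        ring
    _ ≤ exp (l * μ[X] + l ^ 2 * ∫ ω, X ω ^ 2 ∂μ) := add_one_le_exp _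

variable {X : κ → Ω → ℝ} {s : Finset κ} {V t : ℝ}

lemma measureReal_le_sum_sub_integral_le_exp (h_indep : iIndepFun X μ)
    (hX : ∀ i, AEMeasurable (X i) μ) (hb : ∀ i ∈ s, ∀ᵐ ω ∂μ, |X i ω| ≤ 1)
    (hV : ∑ i ∈ s, ∫ ω, X i ω ^ 2 ∂μ ≤ V) (ht : 0 ≤ t) (htV : t ≤ 2 * V) :
    μ.real {ω | t ≤ ∑ i ∈ s, (X i ω - μ[X i])} ≤ exp (-(t ^ 2 / (4 * V))) := by
  have := h_indep.isProbabilityMeasure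
  have hV0 : 0 ≤ V := by linarith
  -- the minimiser of the Chernoff exponent `l ^ 2 * V - l * t`
  set l : ℝ := t / (2 * V) with hl
  have hl0 : 0 ≤ l := by positivity
  have hl1 : |l| ≤ 1 := by rw [abs_of_nonneg hl0]; exact div_le_one_of_le₀ htV (by positivity)
  have h_exponent : l ^ 2 * V - l * t = -(t ^ 2 / (4 * V)) := by
    obtain rfl | hV' := hV0.eq_or_lt
    · simp [hl]
    · rw [hl]; field_simp; ring
  have h_int : Integrable (fun ω ↦ exp (l * (∑ i ∈ s, X i) ω)) μ :=
    mgf_pos_iff.1 <| by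
      rw [h_indep.mgf_sum₀ hX]
      exact Finset.prod_pos fun i hi ↦ mgf_pos <|
        integrable_exp_mul_of_mem_Icc (hX i) ((hb i hi).mono fun _ ↦ abs_le.1)
  calc μ.real {ω | t ≤ ∑ i ∈ s, (X i ω - μ[X i])}
      = μ.real {ω | t + ∑ i ∈ s, μ[X i] ≤ (∑ i ∈ s, X i) ω} := by
        simp only [Finset.sum_sub_distrib, Finset.sum_apply, le_sub_iff_add_le]
    _ ≤ exp (-l * (t + ∑ i ∈ s, μ[X i])) * mgf (∑ i ∈ s, X i) μ l :=
        measure_ge_le_exp_mul_mgf _ hl0 h_int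
    _ = exp (-l * (t + ∑ i ∈ s, μ[X i])) * ∏ i ∈ s, mgf (X i) μ l := by
        rw [h_indep.mgf_sum₀ hX]
    _ ≤ exp (-l * (t + ∑ i ∈ s, μ[X i]))
          * ∏ i ∈ s, exp (l * μ[X i] + l ^ 2 * ∫ ω, X i ω ^ 2 ∂μ) := by
        gcongr with i hi
        · exact fun _ _ ↦ mgf_nonneg
        · exact mgf_le_exp_of_abs_le_one (hX i) (hb i hi) hl1
    _ = exp (l ^ 2 * ∑ i ∈ s, ∫ ω, X i ω ^ 2 ∂μ - l * t) := by
        rw [← exp_sum, ← exp_add, Finset.sum_add_distrib, ← Finset.mul_sum, ← Finset.mul_sum]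
        congr 1; ring
    _ ≤ exp (l ^ 2 * V - l * t) := by gcongr
    _ = exp (-(t ^ 2 / (4 * V))) := by rw [h_exponent]

theorem measureReal_le_abs_sum_sub_integral_le_exp (h_indep : iIndepFun X μ)
    (hX : ∀ i, AEMeasurable (X i) μ) (hb : ∀ i ∈ s, ∀ᵐ ω ∂μ, |X i ω| ≤ 1)
    (hV : ∑ i ∈ s, ∫ ω, X i ω ^ 2 ∂μ ≤ V) (ht : 0 ≤ t) (htV : t ≤ 2 * V) :
    μ.real {ω | t ≤ |∑ i ∈ s, (X i ω - μ[X i])|} ≤ 2 * exp (-(t ^ 2 / (4 * V))) := by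
  have := h_indep.isProbabilityMeasure
  have h_upper := measureReal_le_sum_sub_integral_le_exp h_indep hX hb hV ht htV
  have h_lower := measureReal_le_sum_sub_integral_le_exp (X := fun i ω ↦ -X i ω)
    (h_indep.comp (fun _ x ↦ -x) fun _ ↦ measurable_neg) (fun i ↦ (hX i).neg)
    (by simpa only [abs_neg] using hb) (by simpa only [neg_sq] using hV) ht htV
  have h_union : {ω | t ≤ |∑ i ∈ s, (X i ω - μ[X i])|}
      = {ω | t ≤ ∑ i ∈ s, (X i ω - μ[X i])} ∪ {ω | t ≤ ∑ i ∈ s, (-X i ω - ∫ ω, -X i ω ∂μ)} := by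
    ext ω
    simp only [Set.mem_union, Set.mem_ofPred_eq, le_abs, integral_neg, ← Finset.sum_neg_distrib,
      neg_sub, sub_neg_eq_add, neg_add_eq_sub]
  rw [h_union, two_mul]
  exact (measureReal_union_le _ _).trans (add_le_add h_upper h_lower)

lemma exists_forall_notMem_of_sum_measureReal_lt_one [IsProbabilityMeasure μ] {J : Finset κ}
    {E : κ → Set Ω} (h : ∑ j ∈ J, μ.real (E j) < 1) : ∃ ω, ∀ j ∈ J, ω ∉ E j := by
  by_contra! hE
  have h_univ : ⋃ j ∈ J, E j = Set.univ := by
    simpa only [Set.eq_univ_iff_forall, Set.mem_iUnion, exists_prop] using hE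
  have := measureReal_biUnion_finset_le (μ := μ) J E
  rw [h_univ, probReal_univ] at this
  linarith

end Bernstein

section Discrepancy

variable {ι Ω : Type*} [Fintype ι] [MeasurableSpace Ω] {μ : Measure Ω} {z : ι → Ω}
  {A B C : Set Ω}

/-- The local discrepancy of the sample `z` at the set `A`: the fraction of the sample lying in `A`
minus the measure of `A`. The count is written as a sum of indicators so that, for a random sample,
it is a sum of independent random variables. -/
noncomputable def localDiscrepancy (μ : Measure Ω) (z : ι → Ω) (A : Set Ω) : ℝ :=
  (∑ i, A.indicator 1 (z i)) / Fintype.card ι - μ.real A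

lemma localDiscrepancy_empty : localDiscrepancy μ z ∅ = 0 := by
  simp [localDiscrepancy]

lemma localDiscrepancy_univ [Nonempty ι] [IsProbabilityMeasure μ] :
    localDiscrepancy μ z Set.univ = 0 := by
  simp [localDiscrepancy]

lemma abs_localDiscrepancy_le_of_subset_of_subset [IsFiniteMeasure μ] {a δ : ℝ} (hAC : A ⊆ C)
    (hCB : C ⊆ B) (hA : |localDiscrepancy μ z A| ≤ a) (hB : |localDiscrepancy μ z B| ≤ a)
    (hAB : μ.real B - μ.real A ≤ δ) : |localDiscrepancy μ z C| ≤ a + δ := by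
  have frequency_mono {S T : Set Ω} (h : S ⊆ T) :
      (∑ i, S.indicator (1 : Ω → ℝ) (z i)) / Fintype.card ι
        ≤ (∑ i, T.indicator (1 : Ω → ℝ) (z i)) / Fintype.card ι := by
    gcongr
    exact zero_le_one
  have hfAC := frequency_mono hAC
  have hfCB := frequency_mono hCB
  have hμAC : μ.real A ≤ μ.real C := measureReal_mono hAC
  have hμCB : μ.real C ≤ μ.real B := measureReal_mono hCB
  rw [abs_le] at hA hB ⊢
  simp only [localDiscrepancy] at hA hB ⊢
  constructor <;> linarith

lemma integral_sq_indicator_sub_indicator (hA : MeasurableSet A) (hB : MeasurableSet B) :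
    ∫ x, (B.indicator (1 : Ω → ℝ) x - A.indicator 1 x) ^ 2 ∂μ = μ.real (A ∆ B) := by
  rw [← integral_indicator_one (hA.symmDiff hB)]
  congr 1 with x
  by_cases hxA : x ∈ A <;> by_cases hxB : x ∈ B <;> simp [Set.mem_symmDiff, hxA, hxB]

/-- Two sets are compared through the variables `1_B - 1_A`, whose second moment is the measure of
`A ∆ B`; this is what makes the links of a chain cheap when `A` and `B` are close. -/
lemma measureReal_le_abs_localDiscrepancy_sub_le_exp [Nonempty ι] [IsProbabilityMeasure μ]
    (hA : MeasurableSet A) (hB : MeasurableSet B) {t v : ℝ} (hv : μ.real (A ∆ B) ≤ v) (ht : 0 ≤ t)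
    (htv : t ≤ 2 * v) :
    (Measure.pi fun _ : ι ↦ μ).real
        {z | t ≤ |localDiscrepancy μ z B - localDiscrepancy μ z A|}
      ≤ 2 * exp (-(Fintype.card ι * (t ^ 2 / (4 * v)))) := by
  set n : ℝ := (Fintype.card ι : ℝ) with hn
  have hn0 : 0 < n := by rw [hn]; exact_mod_cast Fintype.card_pos
  let f : Ω → ℝ := fun x ↦ B.indicator 1 x - A.indicator 1 x
  have hf : Measurable f := (measurable_one.indicator hB).sub (measurable_one.indicator hA)
  have hf_bound (x : Ω) : |f x| ≤ 1 := by
    by_cases hxA : x ∈ A <;> by_cases hxB : x ∈ B <;> simp [f, hxA, hxB]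
  have hf_mean : ∫ x, f x ∂μ = μ.real B - μ.real A := by
    rw [integral_sub ((integrable_const 1).indicator hB) ((integrable_const 1).indicator hA)]
    exact congrArg₂ _ (integral_indicator_one hB) (integral_indicator_one hA)
  have h_dev (z : ι → Ω) : localDiscrepancy μ z B - localDiscrepancy μ z A
      = (∑ i, (f (z i) - ∫ y : ι → Ω, f (y i) ∂Measure.pi fun _ ↦ μ)) / n := by
    simp only [integral_comp_eval (μ := fun _ : ι ↦ μ) hf.aestronglyMeasurable, hf_mean, f,
      localDiscrepancy, Finset.sum_sub_distrib, Finset.sum_const, Finset.card_univ, nsmul_eq_mul]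
    field_simp
    ring
  have h_var : ∑ i : ι, ∫ y : ι → Ω, f (y i) ^ 2 ∂(Measure.pi fun _ ↦ μ) ≤ n * v := by
    simp only [integral_comp_eval (μ := fun _ : ι ↦ μ) (f := fun x ↦ f x ^ 2)
      (hf.pow_const 2).aestronglyMeasurable, f, integral_sq_indicator_sub_indicator hA hB,
      Finset.sum_const, Finset.card_univ, nsmul_eq_mul]
    gcongr
  have h_bernstein := measureReal_le_abs_sum_sub_integral_le_exp (s := Finset.univ) (t := n * t)
    (iIndepFun_pi (μ := fun _ : ι ↦ μ) fun _ ↦ hf.aemeasurable)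
    (fun i ↦ (hf.comp (measurable_pi_apply i)).aemeasurable)
    (fun i _ ↦ ae_of_all _ fun z ↦ hf_bound (z i)) h_var (by positivity) (by nlinarith)
  have h_exponent : (n * t) ^ 2 / (4 * (n * v)) = n * (t ^ 2 / (4 * v)) := by
    rw [mul_pow, mul_left_comm 4, sq n, mul_assoc n n, mul_div_mul_left _ _ hn0.ne',
      mul_div_assoc]
  simp only [h_dev, abs_div, abs_of_pos hn0, le_div_iff₀' hn0]
  rwa [h_exponent] at h_bernstein

end Discrepancy

section Chaining

variable {ι Ω : Type*} [Fintype ι] [MeasurableSpace Ω] {μ : Measure Ω}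
  {𝓒 : Set (Set Ω)} {F : ℕ → Finset (Set Ω)} {δ t : ℕ → ℝ} {K : ℕ} {z : ι → Ω}

/-- `F` contains brackets of width `δ` for the class `𝓒`, in the sense of empirical processes: every
`C ∈ 𝓒` lies between two members of `F` whose measures differ by at most `δ`. -/
structure IsBracketing_s3 (μ : Measure Ω) (F : Finset (Set Ω)) (𝓒 : Set (Set Ω)) (δ : ℝ) : Prop where
  measurableSet : ∀ A ∈ F, MeasurableSet A
  exists_bracket : ∀ C ∈ 𝓒, ∃ A ∈ F, ∃ B ∈ F, A ⊆ C ∧ C ⊆ B ∧ μ.real B - μ.real A ≤ δ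

/-- The event that chaining needs: for each `k < K`, the local discrepancy of `z` changes by at most
`t k` along a link from level `k` to level `k + 1` of the bracketings `F`. Only pairs of sets as
close as consecutive brackets of one and the same set count as links. -/
def HasSmallLinks (μ : Measure Ω) (F : ℕ → Finset (Set Ω)) (δ t : ℕ → ℝ) (K : ℕ) (z : ι → Ω) :
    Prop :=
  ∀ k < K, ∀ A ∈ F k, ∀ B ∈ F (k + 1), μ.real (A ∆ B) ≤ δ k + δ (k + 1) →
    |localDiscrepancy μ z B - localDiscrepancy μ z A| ≤ t k

lemma isBracketing_pair_empty_univ [IsProbabilityMeasure μ] [DecidableEq (Set Ω)] :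
    IsBracketing_s3 μ {∅, Set.univ} 𝓒 1 where
  measurableSet := by simp
  exists_bracket C _ := ⟨∅, by simp, Set.univ, by simp, C.empty_subset, C.subset_univ, by simp⟩

lemma measureReal_symmDiff_le_of_brackets [IsFiniteMeasure μ] {A B A' B' C D : Set Ω}
    (hA : MeasurableSet A) (hA' : MeasurableSet A') (hAC : A ⊆ C) (hCB : C ⊆ B)
    (hA'C : A' ⊆ C) (hCB' : C ⊆ B') (hA'D : A' ⊆ D) (hDB' : D ⊆ B') :
    μ.real (A ∆ D) ≤ (μ.real B - μ.real A) + (μ.real B' - μ.real A') := by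
  have h_subset : A ∆ D ⊆ (B \ A) ∪ (B' \ A') := by
    rintro x (⟨hxA, hxD⟩ | ⟨hxD, hxA⟩)
    · exact .inr ⟨hCB' (hAC hxA), fun h ↦ hxD (hA'D h)⟩
    · by_cases hxC : x ∈ C
      · exact .inl ⟨hCB hxC, hxA⟩
      · exact .inr ⟨hDB' hxD, fun h ↦ hxC (hA'C h)⟩
  calc μ.real (A ∆ D) ≤ μ.real ((B \ A) ∪ (B' \ A')) := measureReal_mono h_subset
    _ ≤ μ.real (B \ A) + μ.real (B' \ A') := measureReal_union_le _ _
    _ = (μ.real B - μ.real A) + (μ.real B' - μ.real A') := by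
      rw [measureReal_sdiff (hAC.trans hCB) hA, measureReal_sdiff (hA'C.trans hCB') hA']

/-- The chain of `C` follows its lower brackets; only the last link may end in the upper one. -/
theorem HasSmallLinks.abs_localDiscrepancy_le [Nonempty ι] [IsProbabilityMeasure μ]
    (hz : HasSmallLinks μ F δ t K z) (hF : ∀ k, IsBracketing_s3 μ (F k) 𝓒 (δ k))
    (hF₀ : ∀ A ∈ F 0, A = ∅ ∨ A = Set.univ) {C : Set Ω} (hC : C ∈ 𝓒) :
    |localDiscrepancy μ z C| ≤ ∑ k ∈ Finset.range K, t k + δ K := by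
  choose A hA B hB hAC hCB hδ using fun k ↦ (hF k).exists_bracket C hC
  have h_bracket : ∀ k ≤ K, ∀ D ∈ F k, A k ⊆ D → D ⊆ B k →
      |localDiscrepancy μ z D| ≤ ∑ j ∈ Finset.range k, t j := by
    intro k
    induction k with
    | zero =>
      rintro - D hD - -
      obtain rfl | rfl := hF₀ D hD
      · simp [localDiscrepancy_empty]
      · simp [localDiscrepancy_univ]
    | succ k ih =>
      intro hk D hD hAD hDB
      have h_link : |localDiscrepancy μ z D - localDiscrepancy μ z (A k)| ≤ t k := by
        refine hz k hk (A k) (hA k) D hD ?_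
        exact (measureReal_symmDiff_le_of_brackets ((hF k).measurableSet _ (hA k))
          ((hF (k + 1)).measurableSet _ (hA _)) (hAC k) (hCB k) (hAC _) (hCB _) hAD hDB).trans
          (add_le_add (hδ k) (hδ (k + 1)))
      have h_start := ih (Nat.le_of_succ_le hk) (A k) (hA k) subset_rfl ((hAC k).trans (hCB k))
      rw [Finset.sum_range_succ]
      linarith [abs_sub_abs_le_abs_sub (localDiscrepancy μ z D) (localDiscrepancy μ z (A k))]
  have hAB := (hAC K).trans (hCB K)
  exact abs_localDiscrepancy_le_of_subset_of_subset (hAC K) (hCB K)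
    (h_bracket K le_rfl (A K) (hA K) subset_rfl hAB)
    (h_bracket K le_rfl (B K) (hB K) hAB subset_rfl) (hδ K)

theorem exists_hasSmallLinks [Nonempty ι] [IsProbabilityMeasure μ]
    (hF : ∀ k, ∀ A ∈ F k, MeasurableSet A) (ht : ∀ k < K, 0 ≤ t k)
    (htδ : ∀ k < K, t k ≤ 2 * (δ k + δ (k + 1)))
    (h_sum : ∑ k ∈ Finset.range K, ((F k).card * (F (k + 1)).card : ℝ) *
      (2 * exp (-(Fintype.card ι * (t k ^ 2 / (4 * (δ k + δ (k + 1))))))) < 1) :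
    ∃ z : ι → Ω, HasSmallLinks μ F δ t K z := by
  let J : Finset (Σ _ : ℕ, Set Ω × Set Ω) :=
    (Finset.range K).sigma fun k ↦ F k ×ˢ F (k + 1)
  let bad : (Σ _ : ℕ, Set Ω × Set Ω) → Set (ι → Ω) := fun ⟨k, A, B⟩ ↦
    {z | μ.real (A ∆ B) ≤ δ k + δ (k + 1) ∧
      t k < |localDiscrepancy μ z B - localDiscrepancy μ z A|}
  have h_bad : ∀ j ∈ J, (Measure.pi fun _ : ι ↦ μ).real (bad j) ≤
      2 * exp (-(Fintype.card ι * (t j.1 ^ 2 / (4 * (δ j.1 + δ (j.1 + 1)))))) := by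
    rintro ⟨k, A, B⟩ hj
    simp only [J, Finset.mem_sigma, Finset.mem_range, Finset.mem_product] at hj
    obtain ⟨hk, hA, hB⟩ := hj
    by_cases hAB : μ.real (A ∆ B) ≤ δ k + δ (k + 1)
    · refine (measureReal_mono fun z hz ↦ hz.2.le).trans ?_
      exact measureReal_le_abs_localDiscrepancy_sub_le_exp (hF k A hA) (hF (k + 1) B hB) hAB
        (ht k hk) (htδ k hk)
    · simp only [bad, hAB, false_and, Set.ofPred_false, measureReal_empty]
      positivity
  obtain ⟨z, hz⟩ := exists_forall_notMem_of_sum_measureReal_lt_one (J := J) (E := bad) <| by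
    refine (Finset.sum_le_sum h_bad).trans_lt ?_
    simpa only [J, Finset.sum_sigma, Finset.sum_const, Finset.card_product, nsmul_eq_mul,
      Nat.cast_mul] using h_sum
  refine ⟨z, fun k hk A hA B hB hAB ↦ le_of_not_gt fun hlt ↦ hz ⟨k, A, B⟩ ?_ ⟨hAB, hlt⟩⟩
  simp only [J, Finset.mem_sigma, Finset.mem_range, Finset.mem_product]
  exact ⟨hk, hA, hB⟩

end Chaining

section PolynomialBracketing

variable {ι Ω : Type*} [Fintype ι] [MeasurableSpace Ω] {μ : Measure Ω} {𝓒 : Set (Set Ω)} {d : ℕ}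
  {ε n : ℝ}

lemma exists_bracketing_sequence [IsProbabilityMeasure μ] {c : ℝ} (hc : 2 ≤ c) (hd : 1 ≤ d)
    (h𝓒 : ∀ a : ℕ, 1 ≤ a → ∃ F : Finset (Set Ω),
      IsBracketing_s3 μ F 𝓒 (1 / a) ∧ (F.card : ℝ) ≤ (c * (a : ℝ) ^ 2) ^ d) {b : ℕ} (hb : 1 ≤ b) :
    ∃ F : ℕ → Finset (Set Ω), (∀ A ∈ F 0, A = ∅ ∨ A = Set.univ) ∧
      (∀ k, IsBracketing_s3 μ (F k) 𝓒 (1 / b ^ k)) ∧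
      ∀ k, ((F k).card : ℝ) ≤ (c * (b ^ k) ^ 2) ^ d := by
  classical
  choose G hG hG_card using fun k : ℕ ↦ h𝓒 (b ^ k) (Nat.one_le_pow k b hb)
  push_cast at hG hG_card
  have h_two_le : 2 ≤ c ^ d := hc.trans (le_self_pow₀ (by linarith) (by omega))
  refine ⟨Function.update G 0 {∅, Set.univ}, by simp, fun k ↦ ?_, fun k ↦ ?_⟩
  · rcases eq_or_ne k 0 with rfl | hk
    · simpa using isBracketing_pair_empty_univ
    · simpa [hk] using hG k
  · rcases eq_or_ne k 0 with rfl | hk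
    · have h_pair : (({∅, Set.univ} : Finset (Set Ω)).card : ℝ) ≤ 2 :=
        mod_cast Finset.card_le_two
      simpa using h_pair.trans h_two_le
    · simpa [hk] using hG_card k

/-- By Bernoulli's inequality the exponent is at least `17 + 26 * k`, which reduces the claim to
`8 * 17 ^ 2 * 2 ^ 12 ≤ exp 17` and `2 ^ 25 ≤ exp 26`. -/
lemma bracket_pairs_mul_le_exp (k : ℕ) :
    (17 * (64 ^ k) ^ 2) * (17 * (64 ^ (k + 1)) ^ 2) * (8 * 2 ^ k) ≤ exp (17 * (64 / 25) ^ k) := by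
  have h_growth : (17 + k * 26 : ℝ) ≤ 17 * (64 / 25) ^ k := by
    have := one_add_mul_le_pow (a := (39 / 25 : ℝ)) (by norm_num) k
    norm_num at this
    linarith [k.cast_nonneg (α := ℝ)]
  have h_exp_one : (2.7 : ℝ) ≤ exp 1 := by linarith [exp_one_gt_d9]
  have h_exp_17 : (8 * 17 ^ 2 * 2 ^ 12 : ℝ) ≤ exp 17 :=
    calc (8 * 17 ^ 2 * 2 ^ 12 : ℝ) ≤ 2.7 ^ 17 := by norm_num
      _ ≤ exp 1 ^ 17 := by gcongr
      _ = exp 17 := by rw [← exp_nat_mul]; norm_num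
  have h_exp_26 : (2 ^ 25 : ℝ) ≤ exp 26 :=
    calc (2 ^ 25 : ℝ) ≤ 2.7 ^ 26 := by norm_num
      _ ≤ exp 1 ^ 26 := by gcongr
      _ = exp 26 := by rw [← exp_nat_mul]; norm_num
  have h64 : (64 : ℝ) ^ k = (2 ^ k) ^ 6 := by rw [pow_right_comm]; norm_num
  calc (17 * (64 ^ k) ^ 2) * (17 * (64 ^ (k + 1)) ^ 2) * (8 * 2 ^ k)
      = (8 * 17 ^ 2 * 2 ^ 12) * (2 ^ 25 : ℝ) ^ k := by
        rw [pow_succ (64 : ℝ), h64, pow_right_comm (2 : ℝ) 25 k]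
        ring
    _ ≤ exp 17 * exp 26 ^ k := by gcongr
    _ = exp (17 + k * 26) := by rw [exp_add, exp_nat_mul]
    _ ≤ exp (17 * (64 / 25) ^ k) := exp_le_exp.2 h_growth

lemma card_pairs_mul_tail_le (hd : 1 ≤ d) (k : ℕ) :
    (17 * ((64 : ℝ) ^ k) ^ 2) ^ d * (17 * (64 ^ (k + 1)) ^ 2) ^ d
        * (2 * exp (-(17 * d * (64 / 25) ^ k)))
      ≤ 1 / 4 * (1 / 2) ^ k := by
  have h_self_le_pow : (8 * 2 ^ k : ℝ) ≤ (8 * 2 ^ k) ^ d :=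
    le_self_pow₀ (by linarith [one_le_pow₀ (n := k) (by norm_num : (1 : ℝ) ≤ 2)]) (by omega)
  have h_product : (17 * ((64 : ℝ) ^ k) ^ 2) ^ d * (17 * (64 ^ (k + 1)) ^ 2) ^ d * (8 * 2 ^ k)
      ≤ exp (17 * d * (64 / 25) ^ k) :=
    calc (17 * ((64 : ℝ) ^ k) ^ 2) ^ d * (17 * (64 ^ (k + 1)) ^ 2) ^ d * (8 * 2 ^ k)
        ≤ (17 * (64 ^ k) ^ 2) ^ d * (17 * (64 ^ (k + 1)) ^ 2) ^ d * (8 * 2 ^ k) ^ d := by gcongr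
      _ = ((17 * (64 ^ k) ^ 2) * (17 * (64 ^ (k + 1)) ^ 2) * (8 * 2 ^ k)) ^ d := by
          rw [← mul_pow, ← mul_pow]
      _ ≤ exp (17 * (64 / 25) ^ k) ^ d := by gcongr; exact bracket_pairs_mul_le_exp k
      _ = exp (17 * d * (64 / 25) ^ k) := by rw [← exp_nat_mul]; ring_nf
  rw [exp_neg, ← mul_assoc, ← div_eq_mul_inv, div_le_iff₀ (exp_pos _), one_div_pow]
  field_simp
  linarith

lemma threshold_le_two_mul_widths (hε : ε ≤ 1) {k : ℕ} (hk : ε * 64 ^ k < 5) :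
    16 / 25 * ε / 5 ^ k ≤ 2 * (1 / 64 ^ k + 1 / 64 ^ (k + 1)) := by
  have h_widths : (2 * (1 / 64 ^ k + 1 / 64 ^ (k + 1)) : ℝ) = 65 / 32 / 64 ^ k := by
    rw [pow_succ]; field_simp; norm_num
  rw [h_widths, div_le_div_iff₀ (by positivity) (by positivity)]
  rcases Nat.eq_zero_or_pos k with rfl | hk0
  · linarith
  · have : (5 : ℝ) ≤ 5 ^ k := le_self_pow₀ (by norm_num) hk0.ne'
    linarith

lemma le_tail_exponent (hn : 169 * d ≤ n * ε ^ 2) (k : ℕ) :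
    17 * d * (64 / 25) ^ k
      ≤ n * ((16 / 25 * ε / 5 ^ k) ^ 2 / (4 * (1 / 64 ^ k + 1 / 64 ^ (k + 1)))) := by
  have h_exponent : n * ((16 / 25 * ε / 5 ^ k) ^ 2 / (4 * (1 / 64 ^ k + 1 / 64 ^ (k + 1))))
      = n * ε ^ 2 * (4096 / 40625) * (64 / 25) ^ k := by
    have h25 : (25 : ℝ) ^ k = (5 ^ k) ^ 2 := by rw [pow_right_comm]; norm_num
    rw [div_pow (64 : ℝ), h25, pow_succ]
    field_simp
    ring
  rw [h_exponent]
  exact mul_le_mul_of_nonneg_right (by linarith [d.cast_nonneg (α := ℝ)]) (by positivity)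

lemma sum_thresholds_le (hε : 0 ≤ ε) (K : ℕ) :
    ∑ k ∈ Finset.range K, 16 / 25 * ε / 5 ^ k ≤ 4 / 5 * ε := by
  have h_geom : ∑ k ∈ Finset.range K, (1 / 5 : ℝ) ^ k ≤ 5 / 4 := by
    rw [geom_sum_eq (by norm_num), div_le_iff_of_neg (by norm_num)]
    linarith [pow_pos (by norm_num : (0 : ℝ) < 1 / 5) K]
  calc ∑ k ∈ Finset.range K, 16 / 25 * ε / 5 ^ k
      = 16 / 25 * ε * ∑ k ∈ Finset.range K, (1 / 5 : ℝ) ^ k := by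
        simp only [Finset.mul_sum, one_div_pow, mul_one_div]
    _ ≤ 16 / 25 * ε * (5 / 4) := by gcongr
    _ = 4 / 5 * ε := by ring

/-- The brackets of level `k` have width `64⁻ᵏ`, links from level `k` to level `k + 1` may cost
`(16 / 25) ε 5⁻ᵏ`, and the chain stops at the first level `K` of width at most `ε / 5`. -/
theorem exists_forall_abs_localDiscrepancy_le [Nonempty ι] [IsProbabilityMeasure μ] (hd : 1 ≤ d)
    (h𝓒 : ∀ a : ℕ, 1 ≤ a → ∃ F : Finset (Set Ω),
      IsBracketing_s3 μ F 𝓒 (1 / a) ∧ (F.card : ℝ) ≤ (17 * (a : ℝ) ^ 2) ^ d)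
    (hε₀ : 0 < ε) (hε₁ : ε ≤ 1) (hι : 169 * d ≤ Fintype.card ι * ε ^ 2) :
    ∃ z : ι → Ω, ∀ C ∈ 𝓒, |localDiscrepancy μ z C| ≤ ε := by
  obtain ⟨F, hF₀, hF, hF_card⟩ :=
    exists_bracketing_sequence (by norm_num) hd h𝓒 (by norm_num : 1 ≤ 64)
  rw [Nat.cast_ofNat] at hF hF_card
  have h_level : ∃ K : ℕ, 5 ≤ ε * 64 ^ K := by
    obtain ⟨K, hK⟩ := pow_unbounded_of_one_lt (5 / ε) (by norm_num : (1 : ℝ) < 64)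
    exact ⟨K, ((div_lt_iff₀' hε₀).1 hK).le⟩
  classical
  obtain ⟨K, hK, hlt_K⟩ : ∃ K : ℕ, 5 ≤ ε * 64 ^ K ∧ ∀ k < K, ε * 64 ^ k < 5 :=
    ⟨Nat.find h_level, Nat.find_spec h_level, fun k hk ↦ not_le.1 (Nat.find_min h_level hk)⟩
  have h_union_bound : ∑ k ∈ Finset.range K, ((F k).card * (F (k + 1)).card : ℝ) *
      (2 * exp (-(Fintype.card ι *
        ((16 / 25 * ε / 5 ^ k) ^ 2 / (4 * (1 / 64 ^ k + 1 / 64 ^ (k + 1))))))) < 1 :=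
    calc _ ≤ ∑ k ∈ Finset.range K, (1 / 4 * (1 / 2) ^ k : ℝ) := by
          refine Finset.sum_le_sum fun k _ ↦ le_trans ?_ (card_pairs_mul_tail_le hd k)
          gcongr ?_ * ?_ * (2 * exp (-?_))
          exacts [hF_card k, hF_card (k + 1), le_tail_exponent hι k]
      _ = 1 / 4 * ∑ k ∈ Finset.range K, (1 / 2 : ℝ) ^ k := by rw [Finset.mul_sum]
      _ < 1 := by linarith [sum_geometric_two_le K]
  obtain ⟨z, hz⟩ := exists_hasSmallLinks (μ := μ) (δ := fun k ↦ 1 / 64 ^ k)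
    (t := fun k ↦ 16 / 25 * ε / 5 ^ k) (fun k ↦ (hF k).measurableSet)
    (fun k _ ↦ by positivity) (fun k hk ↦ threshold_le_two_mul_widths hε₁ (hlt_K k hk))
    h_union_bound
  refine ⟨z, fun C hC ↦ (hz.abs_localDiscrepancy_le hF hF₀ hC).trans ?_⟩
  have h_width : 1 / 64 ^ K ≤ ε / 5 := by
    rw [div_le_div_iff₀ (by positivity) (by norm_num)]
    linarith
  linarith [sum_thresholds_le hε₀.le K]

end PolynomialBracketing

section AnchoredBoxes

variable {s : ℕ}

lemma volume_real_Iic (x : Fin s → I) : volume.real (Set.Iic x) = ∏ i, (x i : ℝ) := by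
  rw [Measure.real, ← Set.pi_univ_Iic, volume_pi_pi, ENNReal.toReal_prod]
  simp only [unitInterval.volume_Iic, ENNReal.toReal_ofReal (unitInterval.nonneg _)]

/-- The lattice points of the simplex `∑ i, n i ≤ M`, obtained from the solutions of
`∑ i, f i = M` in one more variable by forgetting the slack variable `f 0`. -/
noncomputable def simplexLattice (s M : ℕ) : Finset (Fin s → ℕ) :=
  ((Finset.univ : Finset (Fin (s + 1))).finsuppAntidiag M).image fun f i ↦ f i.succ

lemma mem_simplexLattice {M : ℕ} {n : Fin s → ℕ} : n ∈ simplexLattice s M ↔ ∑ i, n i ≤ M := by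
  simp only [simplexLattice, Finset.mem_image, Finset.mem_finsuppAntidiag, Finset.subset_univ,
    and_true, Fin.sum_univ_succ]
  constructor
  · rintro ⟨f, rfl, rfl⟩
    exact Nat.le_add_left _ _
  · intro h
    exact ⟨Finsupp.equivFunOnFinite.symm (Fin.cons (M - ∑ i, n i) n), by simp [h], by simp⟩

lemma card_simplexLattice_le_choose (s M : ℕ) :
    (simplexLattice s M).card ≤ (s + M).choose s := by
  refine Finset.card_image_le.trans_eq ?_
  rw [Finset.card_finsuppAntidiag_nat_eq_choose, Finset.card_fin, Nat.add_right_comm,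
    Nat.add_sub_cancel, Nat.choose_symm_add]

/-- The `s ^ s` coming from the side length is absorbed by `s ^ s / s! ≤ exp s`. -/
lemma card_simplexLattice_mul_le (s m : ℕ) :
    ((simplexLattice s (s * m)).card : ℝ) ≤ (exp 1 * (m + 1)) ^ s :=
  calc ((simplexLattice s (s * m)).card : ℝ) ≤ ((s + s * m).choose s : ℕ) :=
        mod_cast card_simplexLattice_le_choose s (s * m)
    _ ≤ ((s + s * m : ℕ) : ℝ) ^ s / s.factorial := Nat.choose_le_pow_div s _
    _ = (s : ℝ) ^ s / s.factorial * (m + 1) ^ s := by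
        push_cast
        rw [show (s + s * m : ℝ) = s * (m + 1) by ring, mul_pow, mul_div_right_comm]
    _ ≤ exp s * (m + 1) ^ s := by
        gcongr
        exact pow_div_factorial_le_exp _ s.cast_nonneg s
    _ = (exp 1 * (m + 1)) ^ s := by rw [mul_pow, ← exp_nat_mul, mul_one]

/-- The point of the geometric grid of ratio `r` in the cube with exponents `n`. -/
def geomPoint (r : I) (n : Fin s → ℕ) : Fin s → I := fun i ↦ r ^ n i

lemma volume_real_Iic_geomPoint (r : I) (n : Fin s → ℕ) :
    volume.real (Set.Iic (geomPoint r n)) = (r : ℝ) ^ ∑ i, n i := by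
  rw [volume_real_Iic, ← Finset.prod_pow_eq_pow_sum]
  rfl

/-- Among the grid points above `x` in the simplex, one of maximal degree does the job: if its
degree is not `M`, then none of its exponents can be increased. -/
lemma exists_le_geomPoint (r : I) (M : ℕ) (x : Fin s → I) :
    ∃ n : Fin s → ℕ, ∑ i, n i ≤ M ∧ x ≤ geomPoint r n ∧
      (∑ i, n i = M ∨ geomPoint r (n + 1) ≤ x) := by
  classical
  obtain ⟨n, hn, h_max⟩ := Finset.exists_max_image
    {n ∈ simplexLattice s M | x ≤ geomPoint r n} (fun n ↦ ∑ i, n i)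
    ⟨0, Finset.mem_filter.2 ⟨mem_simplexLattice.2 (by simp),
      fun i ↦ by simpa [geomPoint] using unitInterval.le_one'⟩⟩
  simp only [Finset.mem_filter, mem_simplexLattice] at hn h_max
  refine ⟨n, hn.1, hn.2, or_iff_not_imp_left.2 fun hM i ↦ ?_⟩
  by_contra! h_lt
  let n' := n + Pi.single i 1
  have h_sum : ∑ j, n' j = ∑ j, n j + 1 := by simp [n', Finset.sum_add_distrib]
  have h_above : x ≤ geomPoint r n' := fun j ↦ by
    rcases eq_or_ne j i with rfl | hj
    · simpa [geomPoint, n'] using h_lt.le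
    · simpa [geomPoint, n', hj] using hn.2 j
  have := h_max n' ⟨by omega, h_above⟩
  omega

open Classical in
/-- The anchored boxes with corner in the geometric grid of ratio `r` and degree at most `M`, the
boxes one step further in every coordinate, and the empty set. -/
noncomputable def geomBrackets (s : ℕ) (r : I) (M : ℕ) : Finset (Set (Fin s → I)) :=
  insert ∅ ((simplexLattice s M).image (fun n ↦ Set.Iic (geomPoint r n)) ∪
    (simplexLattice s M).image fun n ↦ Set.Iic (geomPoint r (n + 1)))

lemma mem_geomBrackets {r : I} {M : ℕ} {A : Set (Fin s → I)} :
    A ∈ geomBrackets s r M ↔ A = ∅ ∨ ∃ n : Fin s → ℕ, ∑ i, n i ≤ M ∧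
      (A = Set.Iic (geomPoint r n) ∨ A = Set.Iic (geomPoint r (n + 1))) := by
  simp only [geomBrackets, Finset.mem_insert, Finset.mem_union, Finset.mem_image,
    mem_simplexLattice, and_or_left, exists_or, eq_comm (a := A)]

lemma card_geomBrackets_le (s : ℕ) (r : I) (M : ℕ) :
    (geomBrackets s r M).card ≤ 3 * (simplexLattice s M).card := by
  have h_pos : 0 < (simplexLattice s M).card :=
    Finset.card_pos.2 ⟨0, mem_simplexLattice.2 (by simp)⟩
  calc (geomBrackets s r M).card
      ≤ ((simplexLattice s M).card + (simplexLattice s M).card) + 1 :=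
        (Finset.card_insert_le _ _).trans <| Nat.add_le_add_right ((Finset.card_union_le _ _).trans
          (add_le_add Finset.card_image_le Finset.card_image_le)) 1
    _ ≤ 3 * (simplexLattice s M).card := by omega

lemma isBracketing_geomBrackets {r : I} {M : ℕ} {δ : ℝ} (h_step : 1 - (r : ℝ) ^ s ≤ δ)
    (h_cutoff : (r : ℝ) ^ M ≤ δ) :
    IsBracketing_s3 volume (geomBrackets s r M) (Set.range Set.Iic) δ where
  measurableSet A hA := by
    obtain rfl | ⟨n, -, rfl | rfl⟩ := mem_geomBrackets.1 hA
    exacts [MeasurableSet.empty, measurableSet_Iic, measurableSet_Iic]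
  exists_bracket := by
    rintro _ ⟨x, rfl⟩
    obtain ⟨n, hn, h_above, h_eq | h_below⟩ := exists_le_geomPoint r M x
    · refine ⟨∅, mem_geomBrackets.2 (.inl rfl), _, mem_geomBrackets.2 (.inr ⟨n, hn, .inl rfl⟩),
        Set.empty_subset _, Set.Iic_subset_Iic.2 h_above, ?_⟩
      rwa [measureReal_empty, sub_zero, volume_real_Iic_geomPoint, h_eq]
    · refine ⟨_, mem_geomBrackets.2 (.inr ⟨n, hn, .inr rfl⟩), _,
        mem_geomBrackets.2 (.inr ⟨n, hn, .inl rfl⟩), Set.Iic_subset_Iic.2 h_below,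
        Set.Iic_subset_Iic.2 h_above, ?_⟩
      have h_sum : ∑ i, (n + 1) i = ∑ i, n i + s := by simp [Finset.sum_add_distrib]
      rw [volume_real_Iic_geomPoint, volume_real_Iic_geomPoint, h_sum]
      calc (r : ℝ) ^ ∑ i, n i - (r : ℝ) ^ (∑ i, n i + s)
          = (r : ℝ) ^ (∑ i, n i) * (1 - (r : ℝ) ^ s) := by ring
        _ ≤ 1 - (r : ℝ) ^ s :=
            mul_le_of_le_one_left (sub_nonneg.2 (pow_le_one₀ r.2.1 r.2.2))
              (pow_le_one₀ r.2.1 r.2.2)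
        _ ≤ δ := h_step

/-- With ratio `exp (-1 / (s a))` and cut-off degree `s a ^ 2`, the step factor is `exp (-1 / a)`
and the cut-off volume is `exp (-a)`. -/
lemma exists_isBracketing_range_Iic (hs : 1 ≤ s) {a : ℕ} (ha : 1 ≤ a) :
    ∃ F : Finset (Set (Fin s → I)),
      IsBracketing_s3 volume F (Set.range Set.Iic) (1 / a) ∧
        (F.card : ℝ) ≤ (17 * (a : ℝ) ^ 2) ^ s := by
  have : (0 : ℝ) < s := by exact_mod_cast hs
  have ha' : (1 : ℝ) ≤ a := by exact_mod_cast ha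
  let r : I := ⟨exp (-(1 / (s * a))), (exp_pos _).le,
    exp_le_one_iff.2 (neg_nonpos.2 (by positivity))⟩
  refine ⟨geomBrackets s r (s * a ^ 2), isBracketing_geomBrackets ?_ ?_, ?_⟩
  · have h_step : (r : ℝ) ^ s = exp (-(1 / a)) := by
      simp only [r, ← exp_nat_mul]
      congr 1
      field_simp
    rw [h_step]
    linarith [one_sub_le_exp_neg (1 / a : ℝ)]
  · have h_cutoff : (r : ℝ) ^ (s * a ^ 2) = exp (-a) := by
      simp only [r, ← exp_nat_mul]
      congr 1
      push_cast
      field_simp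
    rw [h_cutoff, exp_neg, one_div]
    gcongr
    linarith [add_one_le_exp (a : ℝ)]
  · calc ((geomBrackets s r (s * a ^ 2)).card : ℝ)
        ≤ 3 * (simplexLattice s (s * a ^ 2)).card := mod_cast card_geomBrackets_le s r _
      _ ≤ 3 ^ s * (exp 1 * ((a ^ 2 : ℕ) + 1)) ^ s := by
          gcongr
          · exact le_self_pow₀ (by norm_num) (by omega)
          · exact card_simplexLattice_mul_le s (a ^ 2)
      _ = (3 * (exp 1 * (a ^ 2 + 1))) ^ s := by rw [mul_pow 3]; push_cast; rfl
      _ ≤ (17 * (a : ℝ) ^ 2) ^ s := by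
          exact pow_le_pow_left₀ (by positivity) (by nlinarith [exp_one_lt_d9]) s

lemma starDiscrepancy_coe_le {N : ℕ} {ε : ℝ} {z : Fin N → Fin s → I}
    (hz : ∀ x, |localDiscrepancy volume z (Set.Iic x)| ≤ ε) :
    starDiscrepancy s N (fun n i ↦ (z n i : ℝ)) ≤ ε := by
  classical
  have : Nonempty (Set.Icc (0 : Fin s → ℝ) 1) := ⟨0, le_rfl, zero_le_one⟩
  refine ciSup_le fun ⟨x, hx₀, hx₁⟩ ↦ ?_
  let y : Fin s → I := fun i ↦ ⟨x i, hx₀ i, hx₁ i⟩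
  have h_count : (Nat.card {n : Fin N // (fun i ↦ (z n i : ℝ)) ∈ Set.Icc 0 x} : ℝ)
      = ∑ n, (Set.Iic y).indicator 1 (z n) := by
    rw [Nat.card_eq_fintype_card, Fintype.card_subtype, Finset.card_filter, Nat.cast_sum]
    refine Finset.sum_congr rfl fun n _ ↦ ?_
    have h_mem : (fun i ↦ (z n i : ℝ)) ∈ Set.Icc 0 x ↔ z n ∈ Set.Iic y :=
      ⟨fun h i ↦ h.2 i, fun h ↦ ⟨fun i ↦ (z n i).2.1, fun i ↦ h i⟩⟩
    simp only [h_mem, Set.indicator_apply, Pi.one_apply, Nat.cast_ite, Nat.cast_one, Nat.cast_zero]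
  have h_local := hz y
  rwa [localDiscrepancy, volume_real_Iic, ← h_count, Fintype.card_fin] at h_local

end AnchoredBoxes

theorem stmt_3 (s : ℕ) (hs : 1 ≤ s) (ε : ℝ) (hε : ε ∈ Set.Ioc (0:ℝ) 1) :
    ∃ N : ℕ, 1 ≤ N ∧ (N : ℝ) ≤ ⌈169 * (s : ℝ) * ε⁻¹ ^ 2⌉ ∧
      ∃ z : Fin N → (Fin s → ℝ), (∀ n, z n ∈ Set.Icc (0 : Fin s → ℝ) 1) ∧
        starDiscrepancy s N z ≤ ε := by
  obtain ⟨hε₀, hε₁⟩ := hε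
  have h_pos : 0 < 169 * (s : ℝ) * ε⁻¹ ^ 2 := by positivity
  set N : ℕ := ⌈169 * (s : ℝ) * ε⁻¹ ^ 2⌉₊ with hN
  have hN_pos : 0 < N := Nat.ceil_pos.2 h_pos
  have hN_large : 169 * (s : ℝ) ≤ N * ε ^ 2 := by
    have := Nat.le_ceil (169 * (s : ℝ) * ε⁻¹ ^ 2)
    rwa [← hN, inv_pow, ← div_eq_mul_inv, div_le_iff₀ (by positivity)] at this
  have : NeZero N := ⟨hN_pos.ne'⟩
  obtain ⟨z, hz⟩ := exists_forall_abs_localDiscrepancy_le (ι := Fin N) (μ := volume) hs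
    (fun _ ha ↦ exists_isBracketing_range_Iic hs ha) hε₀ hε₁ (by rwa [Fintype.card_fin])
  refine ⟨N, hN_pos, ?_, fun n i ↦ z n i, fun n ↦ ⟨fun i ↦ (z n i).2.1, fun i ↦ (z n i).2.2⟩,
    starDiscrepancy_coe_le fun x ↦ hz _ ⟨x, rfl⟩⟩
  rw [hN, ← Int.natCast_ceil_eq_ceil h_pos.le, Int.cast_natCast]
end
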